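/- (Corollary 1: consensus criterion without zero-equality weighting matrices.) Consider the multi-agent system of m ≥ 2 agents x_k : ℝ → ℝ^n with ẋ_k(t) = A x_k(t) + B u_k(t−τ_k(t)), u_k(t) = −Σ_{l≠k} a_{kl} K (x_k(t) − x_l(t)), where each delay τ_k : ℝ → ℝ is continuous with 0 ≤ τ_k^l ≤ τ_k(t) ≤ τ_k^u; equivalently, the stacked error state z(t) = (G⊗I_n)x(t) ∈ ℝ^F satisfies ż(t) = Ā z(t) − Σ_{k=1}^m B̄_k z(t−τ_k(t)). Suppose there exist, for each k = 1,…,m: symmetric positive definite matrices P_k ∈ ℝ^{3F×3F}, Q_{1k}, Q_{2k} ∈ ℝ^{F×F}, R_{1k}, R_{2k} ∈ ℝ^{2F×2F}, and arbitrary matrices Y_{ikj} ∈ ℝ^{(1+(3+3N)m)F×F} (i = 1,2,3; j = 1,…,2N+1), such that for every choice of delay values (τ_1(t),…,τ_m(t)) with each τ_k(t) ∈ {τ_k^l, τ_k^u}, the symmetric block matrix [[Π̃, X̄_1, X̄_{23}],[X̄_1ᵀ, −R̄_1, 0],[X̄_{23}ᵀ, 0, −R̄_2]] is negative definite, where Π̃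 = Σ_{k=1}^m { Sym(Π_{2k} P_k Π_{1k}ᵀ) + e_1 Q_{1k} e_1ᵀ + e_{1+k}(Q_{2k}−Q_{1k})e_{1+k}ᵀ − e_{1+m+k} Q_{2k} e_{1+m+k}ᵀ + Π_3(τ_k^l R_{1k} + τ̃_k R_{2k})Π_3ᵀ + Sym(Ȳ_{1k}M̄_{1k}ᵀ + Ȳ_{2k}M̄_{2k}ᵀ + Ȳ_{3k}M̄_{3k}ᵀ) }, R̄_1 = blockdiag over k of τ_k^l · ℐ_N ⊗ R_{1k}, and R̄_2 = blockdiag over k of (τ_k(t)−τ_k^l)·ℐ_N⊗R_{2k} + (τ_k^u−τ_k(t))·ℐ_N⊗R_{2k}. Then the multi-agent system achieves consensus: for all agents i, j, x_i(t) − x_j(t) → 0 as t → ∞. -/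

import Mathlib

open Matrix Kronecker

/-! Formalization of Theorem 1 (individual-delay-reflected consensus criterion) for
multi-agent systems with heterogeneous time-varying delays.

Notation: `m` agents with `n`-dimensional states, `F = n(m−1)`; the agent-difference
(error) state space `ℝ^F` is indexed by `ag m n = Fin (m-1) × Fin n`, the augmented space
`ℝ^{(1+(3+3N)m)F}` by `bg m n N`, and the `(2N+2)F`-dimensional column space of the block
matrices `Ȳ_{ik}`, `M̄_{xk}` (matching the block-diagonal structure of
`ℐ_N ⊗ (2F×2F matrix)`) by `kp m n N = Fin (N+1) × (ag m n ⊕ ag m n)`.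
Paper blocks are 1-based: paper agent index `k ∈ {1,…,m}` is `(k : Fin m)` with paper
value `(k:ℕ)+1`, and `eB f` is the paper's block selector `e_f`. -/

abbrev ag (m n : ℕ) := Fin (m - 1) × Fin n
abbrev bg (m n N : ℕ) := Fin (1 + (3 + 3 * N) * m) × ag m n
abbrev kp (m n N : ℕ) := Fin (N + 1) × (ag m n ⊕ ag m n)

/-- Block selector matrix `e_f ∈ ℝ^{(1+(3+3N)m)F × F}` (1-based block index `f`). -/
def eB (m n N : ℕ) (f : ℕ) : Matrix (bg m n N) (ag m n) ℝ := fun p j =>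
  if (p.1 : ℕ) + 1 = f ∧ p.2 = j then 1 else 0

/-- `Sym(X) = X + Xᵀ`. -/
def symM {α : Type*} (X : Matrix α α ℝ) : Matrix α α ℝ := X + Xᵀ

/-- Tree-type transformation matrix `G = [1_{m−1} | −I_{m−1}]`. -/
def Gm (m : ℕ) : Matrix (Fin (m - 1)) (Fin m) ℝ := fun i j =>
  if (j : ℕ) = 0 then 1 else if (j : ℕ) = (i : ℕ) + 1 then -1 else 0

/-- `U = [0_{m−1} | −I_{m−1}]ᵀ`. -/
def Um (m : ℕ) : Matrix (Fin m) (Fin (m - 1)) ℝ := fun i j =>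
  if (i : ℕ) = (j : ℕ) + 1 then -1 else 0

/-- `E_k`: a single `1` at entry `(k,k)`. -/
def Em (m : ℕ) (k : Fin m) : Matrix (Fin m) (Fin m) ℝ := fun i j =>
  if i = k ∧ j = k then 1 else 0

/-- Graph Laplacian built from the adjacency weights:
`l_{kl} = −a_{kl}` for `k ≠ l`, `l_{kk} = Σ_{l≠k} a_{kl}`. -/
def Lap (m : ℕ) (adj : Fin m → Fin m → ℝ) : Matrix (Fin m) (Fin m) ℝ := fun k l =>
  if k = l then ∑ l' ∈ Finset.univ.erase k, adj k l' else -(adj k l)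

/-- `Ā = I_{m−1} ⊗ A`. -/
def Abar (m n : ℕ) (A : Matrix (Fin n) (Fin n) ℝ) : Matrix (ag m n) (ag m n) ℝ :=
  (1 : Matrix (Fin (m - 1)) (Fin (m - 1)) ℝ) ⊗ₖ A

/-- `B̄_k = G E_k L U ⊗ (BK)`. -/
def Bbar (m n r : ℕ) (adj : Fin m → Fin m → ℝ) (B : Matrix (Fin n) (Fin r) ℝ)
    (K : Matrix (Fin r) (Fin n) ℝ) (k : Fin m) : Matrix (ag m n) (ag m n) ℝ :=
  (Gm m * Em m k * Lap m adj * Um m) ⊗ₖ (B * K)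

/-- The row `e_1Āᵀ − Σ_{k'} e_{1+2m+k'} B̄_{k'}ᵀ` mapping `ζ(t)` to `ż(t)`. -/
def dynRow (m n r N : ℕ) (A : Matrix (Fin n) (Fin n) ℝ) (adj : Fin m → Fin m → ℝ)
    (B : Matrix (Fin n) (Fin r) ℝ) (K : Matrix (Fin r) (Fin n) ℝ) :
    Matrix (bg m n N) (ag m n) ℝ :=
  eB m n N 1 * (Abar m n A)ᵀ
    - ∑ k : Fin m, eB m n N (2 * m + (k : ℕ) + 2) * (Bbar m n r adj B K k)ᵀ

/-- `Π_{1k} = [e_1, τ_k^l e_{1+3m+k}, (τ_k(t)−τ_k^l)e_{1+(3+N)m+k} + (τ_k^u−τ_k(t))e_{1+(3+2N)m+k}]`. -/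
def Pi1 (m n N : ℕ) (τl τu τv : Fin m → ℝ) (k : Fin m) :
    Matrix (bg m n N) (Fin 3 × ag m n) ℝ := fun p c =>
  if c.1 = 0 then eB m n N 1 p c.2
  else if c.1 = 1 then τl k * eB m n N (3 * m + (k : ℕ) + 2) p c.2
  else (τv k - τl k) * eB m n N ((3 + N) * m + (k : ℕ) + 2) p c.2
        + (τu k - τv k) * eB m n N ((3 + 2 * N) * m + (k : ℕ) + 2) p c.2

/-- `Π_{2k} = [e_1Āᵀ − Σ_{k'} e_{1+2m+k'}B̄_{k'}ᵀ, e_1 − e_{1+k}, e_{1+k} − e_{1+m+k}]`. -/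
def Pi2 (m n r N : ℕ) (A : Matrix (Fin n) (Fin n) ℝ) (adj : Fin m → Fin m → ℝ)
    (B : Matrix (Fin n) (Fin r) ℝ) (K : Matrix (Fin r) (Fin n) ℝ) (k : Fin m) :
    Matrix (bg m n N) (Fin 3 × ag m n) ℝ := fun p c =>
  if c.1 = 0 then dynRow m n r N A adj B K p c.2
  else if c.1 = 1 then (eB m n N 1 - eB m n N ((k : ℕ) + 2)) p c.2
  else (eB m n N ((k : ℕ) + 2) - eB m n N (m + (k : ℕ) + 2)) p c.2

/-- `Π_3 = [e_1Āᵀ − Σ_k e_{1+2m+k}B̄_kᵀ, e_1]`. -/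
def Pi3 (m n r N : ℕ) (A : Matrix (Fin n) (Fin n) ℝ) (adj : Fin m → Fin m → ℝ)
    (B : Matrix (Fin n) (Fin r) ℝ) (K : Matrix (Fin r) (Fin n) ℝ) :
    Matrix (bg m n N) (ag m n ⊕ ag m n) ℝ := fun p c =>
  Sum.elim (dynRow m n r N A adj B K p) (eB m n N 1 p) c

/-- `W̄ = [[0, W],[W, 0]] ∈ ℝ^{2F×2F}`. -/
def Wb (m n : ℕ) (W : Matrix (ag m n) (ag m n) ℝ) :
    Matrix (ag m n ⊕ ag m n) (ag m n ⊕ ag m n) ℝ := fun p q =>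
  match p, q with
  | Sum.inl i, Sum.inr j => W i j
  | Sum.inr i, Sum.inl j => W i j
  | _, _ => 0

/-- `γ_{ij} = (−1)^{j−1}(−1)^i C(j−1,i) C(j+i−1,i)`. -/
def gam (i j : ℕ) : ℝ :=
  (-1 : ℝ) ^ (j - 1) * ((-1 : ℝ) ^ i * ((j - 1).choose i : ℝ) * ((j + i - 1).choose i : ℝ))

/-- `ρ_i^{xk}` for `x = 1,2,3` (here `x : Fin 3`, 0-based). -/
def rho (m n N : ℕ) (x : Fin 3) (k : Fin m) (i : ℕ) : Matrix (bg m n N) (ag m n) ℝ :=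
  if x = 0 then
    (if i = 0 then eB m n N 1 - eB m n N ((k : ℕ) + 2)
     else eB m n N 1 - (i : ℝ) • eB m n N ((2 + i) * m + (k : ℕ) + 2))
  else if x = 1 then
    (if i = 0 then eB m n N ((k : ℕ) + 2) - eB m n N (2 * m + (k : ℕ) + 2)
     else eB m n N ((k : ℕ) + 2) - (i : ℝ) • eB m n N ((2 + i + N) * m + (k : ℕ) + 2))
  else
    (if i = 0 then eB m n N (2 * m + (k : ℕ) + 2) - eB m n N (m + (k : ℕ) + 2)
     else eB m n N (2 * m + (k : ℕ) + 2) - (i : ℝ) • eB m n N ((2 + i + 2 * N) * m + (k : ℕ) + 2))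

/-- The scalar coefficient of the even moment matrices:
`τ_k^l`, `τ_k(t)−τ_k^l`, `τ_k^u−τ_k(t)` for `x = 1,2,3`. -/
def coefM (m : ℕ) (τl τu τv : Fin m → ℝ) (x : Fin 3) (k : Fin m) : ℝ :=
  if x = 0 then τl k else if x = 1 then τv k - τl k else τu k - τv k

/-- Iterated-integral block selectors `e_{1+(3+i)m+k}`, `e_{1+(3+i+N)m+k}`, `e_{1+(3+i+2N)m+k}`. -/
def eEven (m n N : ℕ) (x : Fin 3) (k : Fin m) (i : ℕ) : Matrix (bg m n N) (ag m n) ℝ :=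
  if x = 0 then eB m n N ((3 + i) * m + (k : ℕ) + 2)
  else if x = 1 then eB m n N ((3 + i + N) * m + (k : ℕ) + 2)
  else eB m n N ((3 + i + 2 * N) * m + (k : ℕ) + 2)

/-- Odd moment matrix `M_{2j−1}^{xk} = Σ_{i=0}^{j−1} γ_{ij} ρ_i^{xk}`. -/
def Modd (m n N : ℕ) (x : Fin 3) (k : Fin m) (j : ℕ) : Matrix (bg m n N) (ag m n) ℝ :=
  ∑ i ∈ Finset.range j, gam i j • rho m n N x k i

/-- Even moment matrix `M_{2j}^{xk} = coef ⋅ Σ_{i=0}^{j−1} γ_{ij} e_{…}`. -/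
def Meven (m n N : ℕ) (τl τu τv : Fin m → ℝ) (x : Fin 3) (k : Fin m) (j : ℕ) :
    Matrix (bg m n N) (ag m n) ℝ :=
  coefM m τl τu τv x k • ∑ i ∈ Finset.range j, gam i j • eEven m n N x k i

/-- `M̄_{xk} = [M_1^{xk} ⋯ M_{2N+1}^{xk} 0]`, the `jb`-th `2F`-block holding the pair
`(M_{2jb+1}, M_{2jb+2})` (1-based positions), with the final even slot zero. -/
def Mb (m n N : ℕ) (τl τu τv : Fin m → ℝ) (x : Fin 3) (k : Fin m) :
    Matrix (bg m n N) (kp m n N) ℝ := fun p c =>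
  match c.2 with
  | Sum.inl jj => Modd m n N x k ((c.1 : ℕ) + 1) p jj
  | Sum.inr jj => if (c.1 : ℕ) < N then Meven m n N τl τu τv x k ((c.1 : ℕ) + 1) p jj else 0

/-- `Ȳ_{xk} = [Y_{xk1} ⋯ Y_{xk(2N+1)} 0]`, with the same `2F`-block interleaving. -/
def Yb (m n N : ℕ) (Y : Fin 3 → Fin m → Fin (2 * N + 1) → Matrix (bg m n N) (ag m n) ℝ)
    (x : Fin 3) (k : Fin m) : Matrix (bg m n N) (kp m n N) ℝ := fun p c =>
  match c.2 with
  | Sum.inl jj => Y x k ⟨2 * (c.1 : ℕ), by have := c.1.isLt; omega⟩ p jj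
  | Sum.inr jj =>
      if h : 2 * (c.1 : ℕ) + 1 < 2 * N + 1 then Y x k ⟨2 * (c.1 : ℕ) + 1, h⟩ p jj else 0

/-- `Π̃`: the `(1,1)`-block of the LMI of Corollary 1 (without the zero-equality
weighting matrices). -/
def PitildeC (m n r N : ℕ) (A : Matrix (Fin n) (Fin n) ℝ) (adj : Fin m → Fin m → ℝ)
    (B : Matrix (Fin n) (Fin r) ℝ) (K : Matrix (Fin r) (Fin n) ℝ)
    (τl τu τv : Fin m → ℝ)
    (P : Fin m → Matrix (Fin 3 × ag m n) (Fin 3 × ag m n) ℝ)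
    (Q1 Q2 : Fin m → Matrix (ag m n) (ag m n) ℝ)
    (R1 R2 : Fin m → Matrix (ag m n ⊕ ag m n) (ag m n ⊕ ag m n) ℝ)
    (Y : Fin 3 → Fin m → Fin (2 * N + 1) → Matrix (bg m n N) (ag m n) ℝ) :
    Matrix (bg m n N) (bg m n N) ℝ :=
  ∑ k : Fin m,
    (symM (Pi2 m n r N A adj B K k * P k * (Pi1 m n N τl τu τv k)ᵀ)
      + eB m n N 1 * Q1 k * (eB m n N 1)ᵀ
      + eB m n N ((k : ℕ) + 2) * (Q2 k - Q1 k) * (eB m n N ((k : ℕ) + 2))ᵀ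
      - eB m n N (m + (k : ℕ) + 2) * Q2 k * (eB m n N (m + (k : ℕ) + 2))ᵀ
      + Pi3 m n r N A adj B K * (τl k • R1 k + (τu k - τl k) • R2 k) * (Pi3 m n r N A adj B K)ᵀ
      + symM (Yb m n N Y 0 k * (Mb m n N τl τu τv 0 k)ᵀ
          + Yb m n N Y 1 k * (Mb m n N τl τu τv 1 k)ᵀ
          + Yb m n N Y 2 k * (Mb m n N τl τu τv 2 k)ᵀ))

/-- `X̄_1 = [τ_1^l Ȳ_{11}, …, τ_m^l Ȳ_{1m}]`. -/
def X1b (m n N : ℕ) (τl : Fin m → ℝ)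
    (Y : Fin 3 → Fin m → Fin (2 * N + 1) → Matrix (bg m n N) (ag m n) ℝ) :
    Matrix (bg m n N) (Fin m × kp m n N) ℝ := fun p c =>
  τl c.1 * Yb m n N Y 0 c.1 p c.2

/-- `X̄_{23} = [(τ_k(t)−τ_k^l)Ȳ_{2k} + (τ_k^u−τ_k(t))Ȳ_{3k}]_{k=1,…,m}`. -/
def X23b (m n N : ℕ) (τl τu τv : Fin m → ℝ)
    (Y : Fin 3 → Fin m → Fin (2 * N + 1) → Matrix (bg m n N) (ag m n) ℝ) :
    Matrix (bg m n N) (Fin m × kp m n N) ℝ := fun p c =>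
  (τv c.1 - τl c.1) * Yb m n N Y 1 c.1 p c.2 + (τu c.1 - τv c.1) * Yb m n N Y 2 c.1 p c.2

/-- `R̄_1 = blockdiag_k ( τ_k^l ⋅ ℐ_N ⊗ R_{1k} )`. -/
def R1bC (m n N : ℕ) (τl : Fin m → ℝ)
    (R1 : Fin m → Matrix (ag m n ⊕ ag m n) (ag m n ⊕ ag m n) ℝ) :
    Matrix (Fin m × kp m n N) (Fin m × kp m n N) ℝ := fun p c =>
  if p.1 = c.1 ∧ p.2.1 = c.2.1 then
    τl p.1 * ((2 * (p.2.1 : ℕ) + 1 : ℕ) : ℝ) * R1 p.1 p.2.2 c.2.2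
  else 0

/-- `R̄_2 = blockdiag_k ( (τ_k(t)−τ_k^l)ℐ_N⊗R_{2k} + (τ_k^u−τ_k(t))ℐ_N⊗R_{2k} )`. -/
def R2bC (m n N : ℕ) (τl τu τv : Fin m → ℝ)
    (R2 : Fin m → Matrix (ag m n ⊕ ag m n) (ag m n ⊕ ag m n) ℝ) :
    Matrix (Fin m × kp m n N) (Fin m × kp m n N) ℝ := fun p c =>
  if p.1 = c.1 ∧ p.2.1 = c.2.1 then
    ((2 * (p.2.1 : ℕ) + 1 : ℕ) : ℝ) *
      ((τv p.1 - τl p.1) * R2 p.1 p.2.2 c.2.2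
        + (τu p.1 - τv p.1) * R2 p.1 p.2.2 c.2.2)
  else 0

/-- The full LMI block matrix `[[Π̃, X̄_1, X̄_{23}],[∗, −R̄_1, 0],[∗, 0, −R̄_2]]` of
Corollary 1, evaluated at the delay vector `τv`. -/
def LMImatC (m n r N : ℕ) (A : Matrix (Fin n) (Fin n) ℝ) (adj : Fin m → Fin m → ℝ)
    (B : Matrix (Fin n) (Fin r) ℝ) (K : Matrix (Fin r) (Fin n) ℝ)
    (τl τu τv : Fin m → ℝ)
    (P : Fin m → Matrix (Fin 3 × ag m n) (Fin 3 × ag m n) ℝ)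
    (Q1 Q2 : Fin m → Matrix (ag m n) (ag m n) ℝ)
    (R1 R2 : Fin m → Matrix (ag m n ⊕ ag m n) (ag m n ⊕ ag m n) ℝ)
    (Y : Fin 3 → Fin m → Fin (2 * N + 1) → Matrix (bg m n N) (ag m n) ℝ) :
    Matrix (bg m n N ⊕ ((Fin m × kp m n N) ⊕ (Fin m × kp m n N)))
      (bg m n N ⊕ ((Fin m × kp m n N) ⊕ (Fin m × kp m n N))) ℝ :=
  Matrix.fromBlocks
    (PitildeC m n r N A adj B K τl τu τv P Q1 Q2 R1 R2 Y)
    (Matrix.of fun p c => Sum.elim (X1b m n N τl Y p) (X23b m n N τl τu τv Y p) c)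
    (Matrix.of fun p c => Sum.elim (X1b m n N τl Y c) (X23b m n N τl τu τv Y c) p)
    (Matrix.fromBlocks (-(R1bC m n N τl R1)) 0 0 (-(R2bC m n N τl τu τv R2)))

/-- Control input `u_k(t) = −Σ_{l≠k} a_{kl} K (x_k(t) − x_l(t))`. -/
def uCtrl (m n r : ℕ) (K : Matrix (Fin r) (Fin n) ℝ) (adj : Fin m → Fin m → ℝ)
    (x : Fin m → ℝ → Fin n → ℝ) (k : Fin m) (t : ℝ) : Fin r → ℝ :=
  -∑ l ∈ Finset.univ.erase k, adj k l • K.mulVec (x k t - x l t)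

/-! The error state obeys `z' = Ā z − ∑ B̄_k z(t − τ_k)`. Take a Lyapunov–Krasovskii functional `V`
with quadratic terms in `z` and its integrals, single integrals weighted by `Q` and double integrals
weighted by `R`. The double integrals contribute `−∫ (z', z)ᵀ R (z', z)` over each delay interval to
`V'`, which Bessel's inequality bounds by `−h ∑ (2j + 1) μ_jᵀ R μ_j`, where `h` is the length of the
interval and `μ_j` are the Legendre moments of `(z', z)`. Integration by parts shows `h μ = M̄ᵀ ζ`
in every slot seen by `Ȳ`, so `2 ζᵀ Ȳ (M̄ᵀ ζ − h μ)` can be added for free. For fixed `ζ` and `μ`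
the resulting bound is affine in each delay, so it is largest at a vertex of the delay box,
and there it is the value of the quadratic form of the matrix inequality at `(ζ, −μ)`.
Hence `V' ≤ −ε |z|²`: the state `z` is bounded, so is `z'`, and `|z|²` is integrable
with bounded derivative, which forces `z → 0`. -/

/-! ### Legendre polynomials on the unit interval -/

section Legendre

open Polynomial

theorem integral_eval_mul_eval_iterate_derivative (j : ℕ) (w p : ℝ[X])
    (h₀ : ∀ k < j, (derivative^[k] w).eval 0 = 0) (h₁ : ∀ k < j, (derivative^[k] w).eval 1 = 0) :
    ∫ u in (0 : ℝ)..1, p.eval u * (derivative^[j] w).eval u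
      = (-1) ^ j * ∫ u in (0 : ℝ)..1, (derivative^[j] p).eval u * w.eval u := by
  induction j generalizing p with
  | zero => simp
  | succ j ih =>
    have parts : ∫ u in (0 : ℝ)..1, p.eval u * (derivative (derivative^[j] w)).eval u
        = -∫ u in (0 : ℝ)..1, (derivative p).eval u * (derivative^[j] w).eval u := by
      rw [intervalIntegral.integral_mul_deriv_eq_deriv_mul (fun u _ => p.hasDerivAt u)
        (fun u _ => (derivative^[j] w).hasDerivAt u)
        ((derivative p).continuous.intervalIntegrable _ _)
        ((derivative (derivative^[j] w)).continuous.intervalIntegrable _ _),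
        h₀ j j.lt_succ_self, h₁ j j.lt_succ_self]
      ring
    rw [Function.iterate_succ_apply', parts,
      ih _ (fun k hk => h₀ k (hk.trans j.lt_succ_self))
        (fun k hk => h₁ k (hk.trans j.lt_succ_self)),
      ← Function.iterate_succ_apply, pow_succ]
    ring

theorem eval_iterate_derivative_eq_zero_of_pow_dvd {w q : ℝ[X]} {j k : ℕ} {a : ℝ}
    (hw : q ^ j ∣ w) (hq : q.eval a = 0) (hk : k < j) : (derivative^[k] w).eval a = 0 := by
  obtain ⟨c, hc⟩ := pow_sub_dvd_iterate_derivative_of_pow_dvd k hw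
  rw [hc, eval_mul, eval_pow, hq, zero_pow (Nat.sub_ne_zero_of_lt hk), zero_mul]

/-- The Legendre polynomial of degree `j` on `[0, 1]`, normalized to take the value `1` at `1`.
Mathlib's `shiftedLegendre` takes the value `1` at `0` instead. -/
noncomputable def legendreUnit (j : ℕ) : ℝ[X] :=
  C ((-1) ^ j) * (shiftedLegendre j).map (Int.castRingHom ℝ)

theorem coeff_legendreUnit (j i : ℕ) : (legendreUnit j).coeff i = gam i (j + 1) := by
  simp only [legendreUnit, gam, coeff_C_mul, coeff_map, coeff_shiftedLegendre,
    Nat.add_sub_cancel, Nat.add_right_comm j 1 i, ← Nat.choose_symm_add (a := j)]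
  simp

theorem natDegree_legendreUnit_le (j : ℕ) : (legendreUnit j).natDegree ≤ j :=
  (natDegree_C_mul_le _ _).trans (natDegree_map_le.trans (natDegree_shiftedLegendre j).le)

theorem eval_legendreUnit (j : ℕ) (u : ℝ) :
    (legendreUnit j).eval u = ∑ i ∈ Finset.range (j + 1), gam i (j + 1) * u ^ i := by
  simp only [eval_eq_sum_range' (Nat.lt_succ_of_le (natDegree_legendreUnit_le j)),
    coeff_legendreUnit]

theorem eval_one_legendreUnit (j : ℕ) : (legendreUnit j).eval 1 = 1 := by
  have symm_zero := shiftedLegendre_eval_symm j (0 : ℝ)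
  have eval_zero : aeval (0 : ℝ) (shiftedLegendre j) = 1 := by
    rw [aeval_def, eval₂_at_zero, coeff_shiftedLegendre]
    simp
  rw [eval_zero, sub_zero, aeval_def, eval₂_eq_eval_map] at symm_zero
  rw [legendreUnit, eval_mul, eval_C]
  exact symm_zero.symm

theorem factorial_mul_legendreUnit (j : ℕ) :
    C (j.factorial : ℝ) * legendreUnit j = C ((-1) ^ j) * derivative^[j] (X ^ j * (1 - X) ^ j) := by
  have rodrigues :=
    congrArg (Polynomial.map (Int.castRingHom ℝ)) (factorial_mul_shiftedLegendre_eq j)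
  rw [← iterate_derivative_map] at rodrigues
  simp only [Polynomial.map_mul, Polynomial.map_pow, map_X, Polynomial.map_sub,
    Polynomial.map_one, Polynomial.map_natCast] at rodrigues
  rw [legendreUnit, ← rodrigues, C_eq_natCast]
  ring

theorem integral_eval_mul_legendreUnit_eq_zero {p : ℝ[X]} {j : ℕ} (hp : p.degree < j) :
    ∫ u in (0 : ℝ)..1, p.eval u * (legendreUnit j).eval u = 0 := by
  have hw₀ : ∀ k < j, (derivative^[k] (X ^ j * (1 - X) ^ j : ℝ[X])).eval 0 = 0 := fun k hk =>
    eval_iterate_derivative_eq_zero_of_pow_dvd (Dvd.intro _ rfl) eval_X hk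
  have hw₁ : ∀ k < j, (derivative^[k] (X ^ j * (1 - X) ^ j : ℝ[X])).eval 1 = 0 := fun k hk =>
    eval_iterate_derivative_eq_zero_of_pow_dvd (Dvd.intro_left _ rfl) (by simp) hk
  have scaled : (j.factorial : ℝ) * ∫ u in (0 : ℝ)..1, p.eval u * (legendreUnit j).eval u = 0 := by
    calc (j.factorial : ℝ) * ∫ u in (0 : ℝ)..1, p.eval u * (legendreUnit j).eval u
        = ∫ u in (0 : ℝ)..1, p.eval u * (C (j.factorial : ℝ) * legendreUnit j).eval u := by
          simp only [eval_mul, eval_C, mul_left_comm _ (j.factorial : ℝ),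
            intervalIntegral.integral_const_mul]
      _ = (-1) ^ j * ∫ u in (0 : ℝ)..1,
            p.eval u * (derivative^[j] (X ^ j * (1 - X) ^ j : ℝ[X])).eval u := by
          simp only [factorial_mul_legendreUnit, eval_mul, eval_C, mul_left_comm _ ((-1 : ℝ) ^ j),
            intervalIntegral.integral_const_mul]
      _ = 0 := by
          rw [integral_eval_mul_eval_iterate_derivative j _ p hw₀ hw₁,
            iterate_derivative_eq_zero_of_degree_lt hp]
          simp
  exact (mul_eq_zero.mp scaled).resolve_left (mod_cast j.factorial_ne_zero)

theorem integral_legendreUnit_mul_self (j : ℕ) :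
    ∫ u in (0 : ℝ)..1, (legendreUnit j).eval u * (legendreUnit j).eval u
      = ((2 * j + 1 : ℕ) : ℝ)⁻¹ := by
  set L := legendreUnit j
  -- Integrate `(X L²)' = L² + 2 X L' L` over `[0, 1]`: modulo polynomials of degree `< j`,
  -- which are orthogonal to `L`, the factor `X L'` is `j L`.
  have low : (X * derivative L - C (j : ℝ) * L).degree < (j : WithBot ℕ) := by
    rw [degree_lt_iff_coeff_zero]
    rintro (_ | i) hi
    · simp [Nat.le_zero.mp hi]
    · rw [coeff_sub, coeff_X_mul, coeff_derivative, coeff_C_mul]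
      rcases hi.eq_or_lt with rfl | hi
      · push_cast
        ring
      · simp [coeff_eq_zero_of_natDegree_lt ((natDegree_legendreUnit_le j).trans_lt hi), L]
  have ftc : ∫ u in (0 : ℝ)..1, (derivative (X * (L * L))).eval u = 1 := by
    rw [intervalIntegral.integral_eq_sub_of_hasDerivAt
      (fun u _ => (X * (L * L)).hasDerivAt u) ((derivative _).continuous.intervalIntegrable _ _)]
    simp [L, eval_one_legendreUnit]
  have split : ∀ u : ℝ, (derivative (X * (L * L))).eval u
      = ((2 * j + 1 : ℕ) : ℝ) * (L.eval u * L.eval u)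
        + 2 * ((X * derivative L - C (j : ℝ) * L).eval u * L.eval u) := by
    intro u
    simp only [derivative_mul, derivative_X, eval_add, eval_sub, eval_mul, eval_X, eval_C, eval_one]
    push_cast
    ring
  simp only [split] at ftc
  rw [intervalIntegral.integral_add (Continuous.intervalIntegrable (by fun_prop) _ _)
    (Continuous.intervalIntegrable (by fun_prop) _ _), intervalIntegral.integral_const_mul,
    intervalIntegral.integral_const_mul, integral_eval_mul_legendreUnit_eq_zero low, mul_zero,
    add_zero] at ftc
  exact eq_inv_of_mul_eq_one_right ftc

theorem integral_legendreUnit_mul (i j : ℕ) :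
    ∫ u in (0 : ℝ)..1, (legendreUnit i).eval u * (legendreUnit j).eval u
      = if i = j then ((2 * j + 1 : ℕ) : ℝ)⁻¹ else 0 := by
  have orthogonal : ∀ {i j : ℕ}, i < j →
      ∫ u in (0 : ℝ)..1, (legendreUnit i).eval u * (legendreUnit j).eval u = 0 := fun h =>
    integral_eval_mul_legendreUnit_eq_zero <| degree_le_natDegree.trans_lt <| mod_cast
      (natDegree_legendreUnit_le _).trans_lt h
  rcases lt_trichotomy i j with h | rfl | h
  · rw [if_neg h.ne, orthogonal h]
  · rw [if_pos rfl, integral_legendreUnit_mul_self]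
  · simp only [if_neg h.ne', mul_comm ((legendreUnit i).eval _), orthogonal h]

end Legendre

/-! ### Quadratic forms of real matrices -/

section QuadraticForm

variable {α β γ : Type*} [Fintype α] [Fintype β] [Fintype γ]

theorem dotProduct_mul_mul_transpose_mulVec (X : Matrix α β ℝ) (Q : Matrix β γ ℝ)
    (Z : Matrix α γ ℝ) (v w : α → ℝ) :
    v ⬝ᵥ (X * Q * Zᵀ) *ᵥ w = (Xᵀ *ᵥ v) ⬝ᵥ Q *ᵥ (Zᵀ *ᵥ w) := by
  rw [← mulVec_mulVec, ← mulVec_mulVec, dotProduct_mulVec, ← mulVec_transpose]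

theorem dotProduct_mul_transpose_mulVec (X Z : Matrix α β ℝ) (v w : α → ℝ) :
    v ⬝ᵥ (X * Zᵀ) *ᵥ w = (Xᵀ *ᵥ v) ⬝ᵥ (Zᵀ *ᵥ w) := by
  rw [← mulVec_mulVec, dotProduct_mulVec, ← mulVec_transpose]

theorem dotProduct_symM_mulVec (X : Matrix α α ℝ) (v : α → ℝ) :
    v ⬝ᵥ symM X *ᵥ v = 2 * (v ⬝ᵥ X *ᵥ v) := by
  rw [symM, add_mulVec, dotProduct_add, dotProduct_transpose_mulVec, two_mul]

theorem dotProduct_mulVec_comm_of_isHermitian {M : Matrix α α ℝ} (hM : M.IsHermitian)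
    (v w : α → ℝ) : v ⬝ᵥ M *ᵥ w = w ⬝ᵥ M *ᵥ v := by
  rw [← dotProduct_transpose_mulVec, ← conjTranspose_eq_transpose_of_trivial, hM.eq]

theorem dotProduct_mulVec_self_nonneg {M : Matrix α α ℝ} (hM : M.PosSemidef) (v : α → ℝ) :
    0 ≤ v ⬝ᵥ M *ᵥ v := by
  simpa only [star_trivial] using hM.dotProduct_mulVec_nonneg v

theorem dotProduct_self_nonneg (v : α → ℝ) : 0 ≤ v ⬝ᵥ v := by
  simpa only [star_trivial] using dotProduct_self_star_nonneg v

theorem dotProduct_self_pos {v : α → ℝ} (hv : v ≠ 0) : 0 < v ⬝ᵥ v := by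
  simpa only [star_trivial] using dotProduct_star_self_pos_iff.mpr hv

theorem exists_forall_mul_dotProduct_self_le {M : Matrix α α ℝ} (hM : M.PosDef) :
    ∃ ε > 0, ∀ v : α → ℝ, ε * (v ⬝ᵥ v) ≤ v ⬝ᵥ M *ᵥ v := by
  have ne_zero : ∀ v ∈ Metric.sphere (0 : α → ℝ) 1, v ≠ 0 := fun v hv =>
    ne_zero_of_mem_unit_sphere ⟨v, hv⟩
  obtain ⟨ε, hε, hle⟩ := (isCompact_sphere (0 : α → ℝ) 1).exists_forall_le' (a := (0 : ℝ))
    (f := fun v => (v ⬝ᵥ M *ᵥ v) / (v ⬝ᵥ v))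
    (ContinuousOn.div (by fun_prop) (by fun_prop) fun v hv =>
      (dotProduct_self_pos (ne_zero v hv)).ne')
    (fun v hv => div_pos (by simpa using hM.dotProduct_mulVec_pos (ne_zero v hv))
      (dotProduct_self_pos (ne_zero v hv)))
  refine ⟨ε, hε, fun v => ?_⟩
  obtain rfl | hv := eq_or_ne v 0
  · simp
  have unit := hle (‖v‖⁻¹ • v) (by simp [norm_smul, hv])
  have cancel : ‖v‖⁻¹ * ‖v‖⁻¹ ≠ 0 := by simpa using hv
  simp only [mulVec_smul, dotProduct_smul, smul_dotProduct, smul_eq_mul, ← mul_assoc,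
    mul_div_mul_left _ _ cancel] at unit
  exact (le_div_iff₀ (dotProduct_self_pos hv)).mp unit

theorem exists_forall_mul_dotProduct_self_le_of_finite {ι : Type*} [Finite ι]
    {M : ι → Matrix α α ℝ} (hM : ∀ i, (M i).PosDef) :
    ∃ ε > 0, ∀ i, ∀ v : α → ℝ, ε * (v ⬝ᵥ v) ≤ v ⬝ᵥ M i *ᵥ v := by
  choose δ δ_pos hδ using fun i => exists_forall_mul_dotProduct_self_le (hM i)
  cases isEmpty_or_nonempty ι with
  | inl _ => exact ⟨1, one_pos, isEmptyElim⟩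
  | inr _ =>
    obtain ⟨i₀, hi₀⟩ := Finite.exists_min δ
    exact ⟨δ i₀, δ_pos i₀, fun i v => (mul_le_mul_of_nonneg_right (hi₀ i)
      (dotProduct_self_nonneg v)).trans (hδ i v)⟩

theorem hasDerivAt_dotProduct_mulVec_self {M : Matrix α α ℝ} (hM : M.IsHermitian)
    {f : ℝ → α → ℝ} {f' : α → ℝ} {t : ℝ} (hf : HasDerivAt f f' t) :
    HasDerivAt (fun s => f s ⬝ᵥ M *ᵥ f s) (2 * (f' ⬝ᵥ M *ᵥ f t)) t := by
  have h : HasDerivAt (fun s => f s ⬝ᵥ M *ᵥ f s) (f' ⬝ᵥ M *ᵥ f t + f t ⬝ᵥ M *ᵥ f') t := by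
    simp only [dotProduct, ← Finset.sum_add_distrib]
    refine HasDerivAt.fun_sum fun i _ => ((hasDerivAt_pi.mp hf i).mul ?_)
    exact HasDerivAt.fun_sum fun j _ => (hasDerivAt_pi.mp hf j).const_mul (M i j)
  rwa [dotProduct_mulVec_comm_of_isHermitian hM (f t), ← two_mul] at h

end QuadraticForm

/-! ### Bessel's inequality with a matrix weight -/

section Bessel

open intervalIntegral

theorem sum_mul_sq_integral_le_integral_sq {ι : Type*} [Fintype ι] [DecidableEq ι] {a b : ℝ}
    (hab : a ≤ b) {φ : ι → ℝ → ℝ} (hφ : ∀ i, Continuous (φ i)) {c : ι → ℝ} (hc : ∀ i, c i ≠ 0)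
    (orthogonal : ∀ i j, ∫ u in a..b, φ i u * φ j u = if i = j then (c j)⁻¹ else 0)
    {f : ℝ → ℝ} (hf : Continuous f) :
    ∑ i, c i * (∫ u in a..b, φ i u * f u) ^ 2 ≤ ∫ u in a..b, f u ^ 2 := by
  set coeff : ι → ℝ := fun i => c i * ∫ u in a..b, φ i u * f u with hcoeff
  have cross : ∫ u in a..b, ∑ i, coeff i * (φ i u * f u)
      = ∑ i, c i * (∫ u in a..b, φ i u * f u) ^ 2 := by
    rw [integral_finsetSum fun i _ => Continuous.intervalIntegrable (by fun_prop) _ _]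
    simp only [integral_const_mul, hcoeff, mul_assoc, ← sq]
  have square : ∫ u in a..b, ∑ i, ∑ j, coeff i * coeff j * (φ i u * φ j u)
      = ∑ i, c i * (∫ u in a..b, φ i u * f u) ^ 2 := by
    rw [integral_finsetSum fun i _ => Continuous.intervalIntegrable (by fun_prop) _ _]
    refine Finset.sum_congr rfl fun i _ => ?_
    rw [integral_finsetSum fun j _ => Continuous.intervalIntegrable (by fun_prop) _ _]
    simp only [integral_const_mul, orthogonal, mul_ite, mul_zero, Finset.sum_ite_eq,
      Finset.mem_univ, if_true, hcoeff]
    field_simp [hc i]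
  have expand : ∀ u, (f u - ∑ i, coeff i * φ i u) ^ 2
      = f u ^ 2 - 2 * ∑ i, coeff i * (φ i u * f u)
        + ∑ i, ∑ j, coeff i * coeff j * (φ i u * φ j u) := by
    intro u
    rw [sub_sq, sq (∑ i, _), Finset.sum_mul_sum, mul_assoc, mul_comm (f u), Finset.sum_mul]
    simp only [mul_assoc, mul_left_comm (φ _ u)]
  have nonneg : 0 ≤ ∫ u in a..b, (f u - ∑ i, coeff i * φ i u) ^ 2 :=
    integral_nonneg hab fun u _ => sq_nonneg _
  simp only [expand] at nonneg
  rw [integral_add (Continuous.intervalIntegrable (by fun_prop) _ _)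
      (Continuous.intervalIntegrable (by fun_prop) _ _),
    integral_sub (Continuous.intervalIntegrable (by fun_prop) _ _)
      (Continuous.intervalIntegrable (by fun_prop) _ _),
    integral_const_mul, cross, square] at nonneg
  linarith

theorem exists_dotProduct_mulVec_self_eq_sum_sq {κ : Type*} [Fintype κ] {R : Matrix κ κ ℝ}
    (hR : R.PosSemidef) : ∃ S : Matrix κ κ ℝ, ∀ v, v ⬝ᵥ R *ᵥ v = ∑ i, (S *ᵥ v) i ^ 2 := by
  classical
  open scoped MatrixOrder in
  obtain ⟨S, rfl⟩ := CStarAlgebra.nonneg_iff_eq_star_mul_self.mp hR.nonneg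
  refine ⟨S, fun v => ?_⟩
  rw [star_eq_conjTranspose, conjTranspose_eq_transpose_of_trivial, ← mulVec_mulVec,
    dotProduct_transpose_mulVec]
  simp only [dotProduct, sq]

theorem sum_mul_dotProduct_mulVec_integral_le {ι κ : Type*} [Fintype ι] [DecidableEq ι] [Fintype κ]
    {R : Matrix κ κ ℝ} (hR : R.PosSemidef) {a b : ℝ} (hab : a ≤ b)
    {φ : ι → ℝ → ℝ} (hφ : ∀ i, Continuous (φ i)) {c : ι → ℝ} (hc : ∀ i, c i ≠ 0)
    (orthogonal : ∀ i j, ∫ u in a..b, φ i u * φ j u = if i = j then (c j)⁻¹ else 0)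
    {ξ : ℝ → κ → ℝ} (hξ : Continuous ξ) :
    ∑ i, c i * ((∫ u in a..b, φ i u • ξ u) ⬝ᵥ R *ᵥ ∫ u in a..b, φ i u • ξ u)
      ≤ ∫ u in a..b, ξ u ⬝ᵥ R *ᵥ ξ u := by
  obtain ⟨S, hS⟩ := exists_dotProduct_mulVec_self_eq_sum_sq hR
  have coord : ∀ i l, (S *ᵥ ∫ u in a..b, φ i u • ξ u) l = ∫ u in a..b, φ i u * (S *ᵥ ξ u) l := by
    intro i l
    have h := ((ContinuousLinearMap.proj l).comp
      S.mulVecLin.toContinuousLinearMap).intervalIntegral_comp_comm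
        (((hφ i).smul hξ).intervalIntegrable (μ := MeasureTheory.volume) a b)
    simpa [mulVec_smul] using h.symm
  simp only [hS, Finset.mul_sum]
  rw [Finset.sum_comm,
    integral_finsetSum fun l _ => Continuous.intervalIntegrable (by fun_prop) _ _]
  refine Finset.sum_le_sum fun l _ => ?_
  simp only [coord]
  exact sum_mul_sq_integral_le_integral_sq hab hφ hc orthogonal (by fun_prop)

end Bessel

/-! ### Polynomial moments over an interval -/

section Moments

open intervalIntegral Polynomial

variable {E : Type*} [NormedAddCommGroup E] [NormedSpace ℝ E]

/-- The moment of `f` over the interval from `a` to `a + h` with weight `p` in the coordinate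
`u = (s - a) / h`. By Cauchy's formula for repeated integration `unitMoment (X ^ i) f a h` is the
normalized iterated integral `i!/h^(i+1) ∫_a^{a+h} ⋯ ∫_r^{a+h} f(s₁) ds₁ ⋯ ds_{i+1}` of the paper;
unlike the latter it is meaningful, and equal to the limit, at `h = 0`. -/
noncomputable def unitMoment (p : ℝ[X]) (f : ℝ → E) (a h : ℝ) : E :=
  ∫ u in (0 : ℝ)..1, p.eval u • f (a + u * h)

theorem unitMoment_legendreUnit {f : ℝ → E} (hf : Continuous f) (a h : ℝ) (j : ℕ) :
    unitMoment (legendreUnit j) f a h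
      = ∑ i ∈ Finset.range (j + 1), gam i (j + 1) • unitMoment (X ^ i) f a h := by
  simp only [unitMoment, eval_legendreUnit, Finset.sum_smul, eval_pow, eval_X]
  rw [integral_finsetSum fun i _ => Continuous.intervalIntegrable (by fun_prop) _ _]
  simp only [mul_smul, integral_smul]

theorem smul_unitMoment_deriv [CompleteSpace E] {f f' : ℝ → E} (hf : ∀ t, HasDerivAt f (f' t) t)
    (hf' : Continuous f') (p : ℝ[X]) (a h : ℝ) :
    h • unitMoment p f' a h
      = p.eval 1 • f (a + h) - p.eval 0 • f a - unitMoment (derivative p) f a h := by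
  have hline : ∀ u : ℝ, HasDerivAt (fun u => f (a + u * h)) (h • f' (a + u * h)) u := fun u =>
    (hf _).scomp u (by simpa using ((hasDerivAt_id u).mul_const h).const_add a)
  have parts := integral_smul_deriv_eq_deriv_smul (a := 0) (b := 1) (fun u _ => p.hasDerivAt u)
    (fun u _ => hline u) ((derivative p).continuous.intervalIntegrable _ _)
    (Continuous.intervalIntegrable (by fun_prop) _ _)
  simpa only [unitMoment, smul_comm _ h, integral_smul, one_mul, zero_mul, add_zero] using parts

theorem smul_unitMoment_one (f : ℝ → E) (a h : ℝ) :
    h • unitMoment 1 f a h = ∫ s in a..a + h, f s := by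
  simp [unitMoment, mul_comm]

theorem smul_unitMoment_one_deriv [CompleteSpace E] {f f' : ℝ → E}
    (hf : ∀ t, HasDerivAt f (f' t) t) (hf' : Continuous f') (a h : ℝ) :
    h • unitMoment 1 f' a h = f (a + h) - f a := by
  simpa [unitMoment] using smul_unitMoment_deriv hf hf' 1 a h

theorem smul_unitMoment_X_pow_succ_deriv [CompleteSpace E] {f f' : ℝ → E}
    (hf : ∀ t, HasDerivAt f (f' t) t) (hf' : Continuous f') (a h : ℝ) (i : ℕ) :
    h • unitMoment (X ^ (i + 1)) f' a h
      = f (a + h) - ((i + 1 : ℕ) : ℝ) • unitMoment (X ^ i) f a h := by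
  rw [smul_unitMoment_deriv hf hf', derivative_X_pow_succ]
  simp [unitMoment, mul_smul]

theorem unitMoment_apply {κ : Type*} [Fintype κ] {f : ℝ → κ → ℝ} (hf : Continuous f) (p : ℝ[X])
    (a h : ℝ) (c : κ) : unitMoment p f a h c = unitMoment p (fun s => f s c) a h :=
  ((ContinuousLinearMap.proj (R := ℝ) (φ := fun _ : κ => ℝ) c).intervalIntegral_comp_comm
    (Continuous.intervalIntegrable (by fun_prop) _ _)).symm

theorem mul_sum_unitMoment_legendreUnit_le {κ : Type*} [Fintype κ] {R : Matrix κ κ ℝ}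
    (hR : R.PosSemidef) {ξ : ℝ → κ → ℝ} (hξ : Continuous ξ) (N : ℕ) (a : ℝ) {h : ℝ} (hh : 0 ≤ h) :
    h * ∑ j : Fin N, ((2 * j + 1 : ℕ) : ℝ) * (unitMoment (legendreUnit j) ξ a h
        ⬝ᵥ R *ᵥ unitMoment (legendreUnit j) ξ a h)
      ≤ ∫ s in a..a + h, ξ s ⬝ᵥ R *ᵥ ξ s := by
  calc _ ≤ h * ∫ u in (0 : ℝ)..1, ξ (a + u * h) ⬝ᵥ R *ᵥ ξ (a + u * h) := by
        refine mul_le_mul_of_nonneg_left ?_ hh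
        refine sum_mul_dotProduct_mulVec_integral_le hR zero_le_one
          (fun j : Fin N => (legendreUnit j).continuous) (fun j => by positivity)
          (fun i j => ?_) (by fun_prop)
        simp only [integral_legendreUnit_mul, Fin.ext_iff]
    _ = ∫ s in a..a + h, ξ s ⬝ᵥ R *ᵥ ξ s := by
        simpa [unitMoment] using smul_unitMoment_one (fun s => ξ s ⬝ᵥ R *ᵥ ξ s) a h

end Moments

/-! ### The matrix inequality on the delay box -/

/-- The quadratic form of `diag(1, 3, …, 2N - 1) ⊗ R`. -/
def legendreQuad {N : ℕ} {κ : Type*} [Fintype κ] (R : Matrix κ κ ℝ) (μ : Fin N × κ → ℝ) : ℝ :=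
  ∑ j : Fin N, ((2 * j + 1 : ℕ) : ℝ) * ((fun a => μ (j, a)) ⬝ᵥ R *ᵥ fun a => μ (j, a))

theorem legendreQuad_neg {N : ℕ} {κ : Type*} [Fintype κ] (R : Matrix κ κ ℝ)
    (μ : Fin N × κ → ℝ) : legendreQuad R (-μ) = legendreQuad R μ := by
  have slice : ∀ j, (fun a => (-μ) (j, a)) = -fun a => μ (j, a) := fun _ => rfl
  simp only [legendreQuad, slice, mulVec_neg, neg_dotProduct_neg]

theorem legendreQuad_zero {N : ℕ} {κ : Type*} [Fintype κ] (R : Matrix κ κ ℝ) :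
    legendreQuad R (0 : Fin N × κ → ℝ) = 0 := by
  simp [legendreQuad, ← Pi.zero_def]

theorem exists_vertex_forall_mul_le {ι : Type*} (b : ι → ℝ) {l u v : ι → ℝ}
    (hv : ∀ k, l k ≤ v k ∧ v k ≤ u k) :
    ∃ σ : ι → ℝ, (∀ k, σ k = l k ∨ σ k = u k) ∧ ∀ k, v k * b k ≤ σ k * b k := by
  have endpoint : ∀ k, ∃ s, (s = l k ∨ s = u k) ∧ v k * b k ≤ s * b k := fun k => by
    rcases le_total 0 (b k) with hb | hb
    · exact ⟨u k, .inr rfl, mul_le_mul_of_nonneg_right (hv k).2 hb⟩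
    · exact ⟨l k, .inl rfl, mul_le_mul_of_nonpos_right (hv k).1 hb⟩
  choose σ hσ hle using endpoint
  exact ⟨σ, hσ, hle⟩

section Affine

variable (m n N : ℕ) (τl τu τv : Fin m → ℝ) (x : Fin 3) (k : Fin m)

theorem coefM_eq_add_mul : coefM m τl τu τv x k
    = coefM m τl τu 0 x k + τv k * (coefM m τl τu 1 x k - coefM m τl τu 0 x k) := by
  simp only [coefM, Pi.zero_apply, Pi.one_apply]
  split_ifs <;> ring

theorem Pi1_eq_add_smul : Pi1 m n N τl τu τv k
    = Pi1 m n N τl τu 0 k + τv k • (Pi1 m n N τl τu 1 k - Pi1 m n N τl τu 0 k) := by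
  ext p c
  simp only [Pi1, Matrix.add_apply, Matrix.smul_apply, Matrix.sub_apply, smul_eq_mul,
    Pi.zero_apply, Pi.one_apply]
  split_ifs <;> ring

theorem Mb_eq_add_smul : Mb m n N τl τu τv x k
    = Mb m n N τl τu 0 x k + τv k • (Mb m n N τl τu 1 x k - Mb m n N τl τu 0 x k) := by
  ext p ⟨j, a | a⟩
  · simp [Mb]
  · simp only [Mb, Meven, Matrix.add_apply, Matrix.smul_apply, Matrix.sub_apply, smul_eq_mul,
      coefM_eq_add_mul m τl τu τv x k]
    split_ifs <;> ring

end Affine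

section BlockForms

variable {m n N : ℕ} (τl τu τv : Fin m → ℝ)
  (Y : Fin 3 → Fin m → Fin (2 * N + 1) → Matrix (bg m n N) (ag m n) ℝ)

theorem X1b_mulVec (w : Fin m × kp m n N → ℝ) :
    X1b m n N τl Y *ᵥ w = ∑ k, τl k • Yb m n N Y 0 k *ᵥ fun c => w (k, c) := by
  ext p
  simp only [X1b, mulVec, dotProduct, Fintype.sum_prod_type (α₁ := Fin m), Finset.sum_apply,
    Pi.smul_apply, smul_eq_mul, Finset.mul_sum, mul_assoc]

theorem X23b_mulVec (w : Fin m × kp m n N → ℝ) :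
    X23b m n N τl τu τv Y *ᵥ w = ∑ k, ((τv k - τl k) • Yb m n N Y 1 k *ᵥ (fun c => w (k, c))
      + (τu k - τv k) • Yb m n N Y 2 k *ᵥ fun c => w (k, c)) := by
  ext p
  simp only [X23b, mulVec, dotProduct, Fintype.sum_prod_type (α₁ := Fin m), Finset.sum_apply,
    Pi.add_apply, Pi.smul_apply, smul_eq_mul, Finset.mul_sum, mul_assoc, add_mul,
    Finset.sum_add_distrib]

variable (R : Fin m → Matrix (ag m n ⊕ ag m n) (ag m n ⊕ ag m n) ℝ)

theorem dotProduct_R1bC_mulVec (w : Fin m × kp m n N → ℝ) :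
    w ⬝ᵥ R1bC m n N τl R *ᵥ w = ∑ k, τl k * legendreQuad (R k) fun c => w (k, c) := by
  simp only [legendreQuad, dotProduct, mulVec, Fintype.sum_prod_type (α₁ := Fin m),
    Fintype.sum_prod_type (α₁ := Fin (N + 1)), R1bC, Finset.mul_sum, ite_and, ite_mul, zero_mul,
    Finset.sum_const_zero, Finset.sum_ite_irrel, Finset.sum_ite_eq, Finset.mem_univ, if_true]
  simp only [mul_assoc, mul_left_comm (w _)]

theorem R2bC_eq_R1bC : R2bC m n N τl τu τv R = R1bC m n N (τu - τl) R := by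
  ext p c
  simp only [R1bC, R2bC, Pi.sub_apply]
  split_ifs <;> ring

end BlockForms

/-- The matrices and delay bounds entering the criterion, with the names of the theorem:
the system matrices, the graph weights, the bounds of the delays, and the unknowns of the LMI. -/
structure LMIData (m n r N : ℕ) where
  A : Matrix (Fin n) (Fin n) ℝ
  B : Matrix (Fin n) (Fin r) ℝ
  K : Matrix (Fin r) (Fin n) ℝ
  adj : Fin m → Fin m → ℝ
  τl : Fin m → ℝ
  τu : Fin m → ℝ
  P : Fin m → Matrix (Fin 3 × ag m n) (Fin 3 × ag m n) ℝ
  Q1 : Fin m → Matrix (ag m n) (ag m n) ℝ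
  Q2 : Fin m → Matrix (ag m n) (ag m n) ℝ
  R1 : Fin m → Matrix (ag m n ⊕ ag m n) (ag m n ⊕ ag m n) ℝ
  R2 : Fin m → Matrix (ag m n ⊕ ag m n) (ag m n ⊕ ag m n) ℝ
  Y : Fin 3 → Fin m → Fin (2 * N + 1) → Matrix (bg m n N) (ag m n) ℝ

namespace LMIData

variable {m n r N : ℕ} (D : LMIData m n r N)

/-- The matrix of the LMI at the delay vector `τv`. -/
def lmi (τv : Fin m → ℝ) :
    Matrix (bg m n N ⊕ ((Fin m × kp m n N) ⊕ (Fin m × kp m n N)))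
      (bg m n N ⊕ ((Fin m × kp m n N) ⊕ (Fin m × kp m n N))) ℝ :=
  LMImatC m n r N D.A D.adj D.B D.K D.τl D.τu τv D.P D.Q1 D.Q2 D.R1 D.R2 D.Y

/-- The contribution of agent `k` to the bound on the derivative of the Lyapunov functional, as a
function of the augmented vector `ζ` and of the Legendre moments `μ x k` of `(ż, z)` over the three
delay intervals `x = 0, 1, 2` of agent `k`. -/
def rate (ζ : bg m n N → ℝ) (μ : Fin 3 → Fin m → kp m n N → ℝ) (τv : Fin m → ℝ) (k : Fin m) : ℝ :=
  2 * (((Pi2 m n r N D.A D.adj D.B D.K k)ᵀ *ᵥ ζ)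
      ⬝ᵥ D.P k *ᵥ ((Pi1 m n N D.τl D.τu τv k)ᵀ *ᵥ ζ))
    + ((eB m n N 1)ᵀ *ᵥ ζ) ⬝ᵥ D.Q1 k *ᵥ ((eB m n N 1)ᵀ *ᵥ ζ)
    + ((eB m n N (k + 2))ᵀ *ᵥ ζ) ⬝ᵥ (D.Q2 k - D.Q1 k) *ᵥ ((eB m n N (k + 2))ᵀ *ᵥ ζ)
    - ((eB m n N (m + k + 2))ᵀ *ᵥ ζ) ⬝ᵥ D.Q2 k *ᵥ ((eB m n N (m + k + 2))ᵀ *ᵥ ζ)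
    + ((Pi3 m n r N D.A D.adj D.B D.K)ᵀ *ᵥ ζ) ⬝ᵥ (D.τl k • D.R1 k + (D.τu k - D.τl k) • D.R2 k)
      *ᵥ ((Pi3 m n r N D.A D.adj D.B D.K)ᵀ *ᵥ ζ)
    + ∑ x : Fin 3, (2 * (((Yb m n N D.Y x k)ᵀ *ᵥ ζ) ⬝ᵥ
        ((Mb m n N D.τl D.τu τv x k)ᵀ *ᵥ ζ - coefM m D.τl D.τu τv x k • μ x k))
      - coefM m D.τl D.τu τv x k * legendreQuad (if x = 0 then D.R1 k else D.R2 k) (μ x k))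

theorem rate_eq_add_mul (ζ : bg m n N → ℝ) (μ : Fin 3 → Fin m → kp m n N → ℝ)
    (τv : Fin m → ℝ) (k : Fin m) :
    D.rate ζ μ τv k = D.rate ζ μ 0 k + τv k * (D.rate ζ μ 1 k - D.rate ζ μ 0 k) := by
  rw [rate, Pi1_eq_add_smul m n N D.τl D.τu τv k]
  simp only [rate, coefM_eq_add_mul m D.τl D.τu τv, Mb_eq_add_smul m n N D.τl D.τu τv,
    Fin.sum_univ_three, transpose_add, transpose_sub, transpose_smul, add_mulVec, sub_mulVec,
    smul_mulVec, mulVec_add, mulVec_sub, mulVec_smul, dotProduct_add, dotProduct_sub,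
    dotProduct_smul, smul_eq_mul]
  ring

theorem dotProduct_PitildeC_mulVec (ζ : bg m n N → ℝ) (τv : Fin m → ℝ) :
    ζ ⬝ᵥ PitildeC m n r N D.A D.adj D.B D.K D.τl D.τu τv D.P D.Q1 D.Q2 D.R1 D.R2 D.Y *ᵥ ζ
      = ∑ k, D.rate ζ 0 τv k := by
  rw [PitildeC, sum_mulVec, dotProduct_sum]
  refine Finset.sum_congr rfl fun k _ => ?_
  simp only [add_mulVec, dotProduct_add, sub_mulVec, dotProduct_sub, dotProduct_symM_mulVec,
    dotProduct_mul_mul_transpose_mulVec]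
  simp only [rate, add_mulVec, dotProduct_add, sub_mulVec, dotProduct_sub,
    dotProduct_mul_transpose_mulVec, Fin.sum_univ_three, Pi.zero_apply, smul_zero, sub_zero,
    legendreQuad_zero, mul_zero]
  ring

theorem rate_eq_rate_zero_sub (ζ : bg m n N → ℝ) (μ : Fin 3 → Fin m → kp m n N → ℝ)
    (τv : Fin m → ℝ) (k : Fin m) :
    D.rate ζ μ τv k = D.rate ζ 0 τv k - ∑ x : Fin 3, coefM m D.τl D.τu τv x k *
      (2 * (ζ ⬝ᵥ Yb m n N D.Y x k *ᵥ μ x k)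
        + legendreQuad (if x = 0 then D.R1 k else D.R2 k) (μ x k)) := by
  simp only [rate, Pi.zero_apply, legendreQuad_zero, dotProduct_comm (μ _ k),
    ← dotProduct_transpose_mulVec (Yb _ _ _ _ _ _), dotProduct_sub, dotProduct_smul, smul_eq_mul,
    Fin.sum_univ_three, smul_zero, sub_zero, mul_zero]
  ring

theorem dotProduct_lmi_mulVec (τv : Fin m → ℝ) (ζ : bg m n N → ℝ)
    (w₁ w₂ : Fin m × kp m n N → ℝ) :
    Sum.elim ζ (Sum.elim w₁ w₂) ⬝ᵥ D.lmi τv *ᵥ Sum.elim ζ (Sum.elim w₁ w₂)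
      = (∑ k, D.rate ζ 0 τv k)
        + 2 * (ζ ⬝ᵥ X1b m n N D.τl D.Y *ᵥ w₁) + 2 * (ζ ⬝ᵥ X23b m n N D.τl D.τu τv D.Y *ᵥ w₂)
        - w₁ ⬝ᵥ R1bC m n N D.τl D.R1 *ᵥ w₁ - w₂ ⬝ᵥ R2bC m n N D.τl D.τu τv D.R2 *ᵥ w₂ := by
  have upper : (of fun p c => Sum.elim (X1b m n N D.τl D.Y p) (X23b m n N D.τl D.τu τv D.Y p) c)
      = fromCols (X1b m n N D.τl D.Y) (X23b m n N D.τl D.τu τv D.Y) := by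
    ext i (j | j) <;> rfl
  have lower : (of fun p c => Sum.elim (X1b m n N D.τl D.Y c) (X23b m n N D.τl D.τu τv D.Y c) p)
      = fromRows (X1b m n N D.τl D.Y)ᵀ (X23b m n N D.τl D.τu τv D.Y)ᵀ := by
    ext (i | i) j <;> rfl
  rw [lmi, LMImatC, upper, lower, ← dotProduct_PitildeC_mulVec]
  simp only [fromBlocks_mulVec, fromCols_mulVec, fromRows_mulVec, Sum.elim_comp_inl,
    Sum.elim_comp_inr, sumElim_dotProduct_sumElim, dotProduct_add, neg_mulVec, dotProduct_neg,
    zero_mulVec, dotProduct_zero, dotProduct_transpose_mulVec]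
  ring

/-- The vector at which the LMI is tested at a vertex `τv` of the delay box. There at most one of
the intervals `[t - τ_k, t - τ_k^l]` and `[t - τ_k^u, t - τ_k]` of agent `k` is nondegenerate, and
the last block holds the moments over that interval. -/
noncomputable def testVector (ζ : bg m n N → ℝ) (μ : Fin 3 → Fin m → kp m n N → ℝ)
    (τv : Fin m → ℝ) : bg m n N ⊕ ((Fin m × kp m n N) ⊕ (Fin m × kp m n N)) → ℝ :=
  Sum.elim ζ (Sum.elim (fun c => -μ 0 c.1 c.2)
    fun c => if τv c.1 = D.τl c.1 then -μ 2 c.1 c.2 else -μ 1 c.1 c.2)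

theorem testVector_dotProduct_lmi_mulVec (ζ : bg m n N → ℝ) (μ : Fin 3 → Fin m → kp m n N → ℝ)
    {τv : Fin m → ℝ} (hτv : ∀ k, τv k = D.τl k ∨ τv k = D.τu k) :
    D.testVector ζ μ τv ⬝ᵥ D.lmi τv *ᵥ D.testVector ζ μ τv = ∑ k, D.rate ζ μ τv k := by
  rw [testVector, dotProduct_lmi_mulVec, X1b_mulVec, X23b_mulVec, R2bC_eq_R1bC,
    dotProduct_R1bC_mulVec, dotProduct_R1bC_mulVec, dotProduct_sum, dotProduct_sum,
    Finset.mul_sum, Finset.mul_sum, ← Finset.sum_add_distrib, ← Finset.sum_add_distrib,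
    ← Finset.sum_sub_distrib, ← Finset.sum_sub_distrib]
  refine Finset.sum_congr rfl fun k _ => ?_
  have neg_slice : ∀ x, (fun c => -μ x k c) = -μ x k := fun _ => rfl
  by_cases hl : τv k = D.τl k
  · simp only [D.rate_eq_rate_zero_sub ζ μ, Fin.sum_univ_three, coefM, hl, if_true, neg_slice,
      legendreQuad_neg, mulVec_neg, smul_neg, dotProduct_neg, dotProduct_add, dotProduct_smul,
      smul_eq_mul, Pi.sub_apply, Fin.reduceEq, if_false]
    ring
  · have hu := (hτv k).resolve_left hl
    rw [hu] at hl
    simp only [D.rate_eq_rate_zero_sub ζ μ, Fin.sum_univ_three, coefM, hu, hl, if_true, neg_slice,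
      legendreQuad_neg, mulVec_neg, smul_neg, dotProduct_neg, dotProduct_add, dotProduct_smul,
      smul_eq_mul, Pi.sub_apply, Fin.reduceEq, if_false]
    ring

theorem finite_vertices : {σ : Fin m → ℝ | ∀ k, σ k = D.τl k ∨ σ k = D.τu k}.Finite := by
  have := Set.Finite.pi' fun k => Set.toFinite {D.τl k, D.τu k}
  simpa only [Set.mem_insert_iff, Set.mem_singleton_iff] using this

/-- `rate` is affine in every delay, so on the box its sum is largest at a vertex. -/
theorem exists_sum_rate_le
    (hD : ∀ τv : Fin m → ℝ, (∀ k, τv k = D.τl k ∨ τv k = D.τu k) → (-D.lmi τv).PosDef) :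
    ∃ ε > 0, ∀ (ζ : bg m n N → ℝ) (μ : Fin 3 → Fin m → kp m n N → ℝ) (τv : Fin m → ℝ),
      (∀ k, D.τl k ≤ τv k ∧ τv k ≤ D.τu k) → ∑ k, D.rate ζ μ τv k ≤ -(ε * (ζ ⬝ᵥ ζ)) := by
  have := D.finite_vertices.to_subtype
  obtain ⟨ε, hε, hlmi⟩ := exists_forall_mul_dotProduct_self_le_of_finite
    (M := fun σ : {σ : Fin m → ℝ | ∀ k, σ k = D.τl k ∨ σ k = D.τu k} => -D.lmi σ)
    fun σ => hD σ σ.2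
  refine ⟨ε, hε, fun ζ μ τv hτv => ?_⟩
  obtain ⟨σ, hσ, hle⟩ := exists_vertex_forall_mul_le (fun k => D.rate ζ μ 1 k - D.rate ζ μ 0 k) hτv
  have hvertex := hlmi ⟨σ, hσ⟩ (D.testVector ζ μ σ)
  rw [neg_mulVec, dotProduct_neg, D.testVector_dotProduct_lmi_mulVec ζ μ hσ] at hvertex
  have hζ : ζ ⬝ᵥ ζ ≤ D.testVector ζ μ σ ⬝ᵥ D.testVector ζ μ σ := by
    rw [testVector, sumElim_dotProduct_sumElim]
    exact le_add_of_nonneg_right (dotProduct_self_nonneg _)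
  calc ∑ k, D.rate ζ μ τv k
      ≤ ∑ k, D.rate ζ μ σ k := Finset.sum_le_sum fun k _ => by
        rw [D.rate_eq_add_mul ζ μ τv, D.rate_eq_add_mul ζ μ σ]
        exact add_le_add_right (hle k) _
    _ ≤ -(ε * (D.testVector ζ μ σ ⬝ᵥ D.testVector ζ μ σ)) := le_neg_of_le_neg hvertex
    _ ≤ -(ε * (ζ ⬝ᵥ ζ)) := neg_le_neg (mul_le_mul_of_nonneg_left hζ hε.le)

end LMIData

/-! ### The augmented vector -/

section Selectors

variable {m n N : ℕ}

theorem eB_transpose_mulVec (ζ : bg m n N → ℝ) {f : ℕ} (q : Fin (1 + (3 + 3 * N) * m))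
    (hq : (q : ℕ) + 1 = f) : (eB m n N f)ᵀ *ᵥ ζ = fun c => ζ (q, c) := by
  have eB_eq : ∀ p c, eB m n N f p c = if p = (q, c) then 1 else 0 := fun p c => by
    simp only [eB, ← hq, Prod.ext_iff, Fin.ext_iff, Nat.add_right_cancel_iff]
  ext c
  simp [mulVec, dotProduct, eB_eq]

/-- The augmented vector with blocks `z` and, at the 1-based position `qm + k + 2`, `Z q k`. -/
def ofBlocks (z : ag m n → ℝ) (Z : Fin (3 + 3 * N) → Fin m → ag m n → ℝ) : bg m n N → ℝ :=
  Function.uncurry <| Fin.append (fun _ : Fin 1 => z) fun i =>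
    Z (finProdFinEquiv.symm i).1 (finProdFinEquiv.symm i).2

variable (z : ag m n → ℝ) (Z : Fin (3 + 3 * N) → Fin m → ag m n → ℝ)

theorem eB_one_transpose_mulVec_ofBlocks : (eB m n N 1)ᵀ *ᵥ ofBlocks z Z = z := by
  rw [eB_transpose_mulVec _ (Fin.castAdd _ 0 : Fin (1 + (3 + 3 * N) * m)) (by rfl)]
  simp only [ofBlocks, Function.uncurry_apply_pair, Fin.append_left]

theorem eB_transpose_mulVec_ofBlocks (q : Fin (3 + 3 * N)) (k : Fin m) {f : ℕ}
    (hf : f = q * m + k + 2) : (eB m n N f)ᵀ *ᵥ ofBlocks z Z = Z q k := by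
  have position : (Fin.natAdd 1 (finProdFinEquiv (q, k)) : ℕ) + 1 = f := by
    rw [hf, Fin.val_natAdd, finProdFinEquiv_apply_val]
    ring
  rw [eB_transpose_mulVec _ _ position]
  simp only [ofBlocks, Function.uncurry_apply_pair, Fin.append_right, Equiv.symm_apply_apply]

theorem dotProduct_self_le_ofBlocks : z ⬝ᵥ z ≤ ofBlocks z Z ⬝ᵥ ofBlocks z Z := by
  simp only [dotProduct, ofBlocks, Fintype.sum_prod_type (α₁ := Fin (1 + (3 + 3 * N) * m)),
    Fin.sum_univ_add, Function.uncurry_apply_pair, Fin.append_left, Finset.univ_unique,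
    Finset.sum_singleton]
  exact le_add_of_nonneg_right (Finset.sum_nonneg fun _ _ => dotProduct_self_nonneg _)

end Selectors

theorem continuous_sumElim_pi {X ι κ : Type*} [TopologicalSpace X] {f : X → ι → ℝ} {g : X → κ → ℝ}
    (hf : Continuous f) (hg : Continuous g) : Continuous fun s => Sum.elim (f s) (g s) := by
  refine continuous_pi ?_
  rintro (c | c) <;> simp only [Sum.elim_inl, Sum.elim_inr] <;> fun_prop

namespace LMIData

open Polynomial

variable {m n r N : ℕ} (D : LMIData m n r N) (z z' : ℝ → ag m n → ℝ) (τv : Fin m → ℝ) (t : ℝ)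

/-- The left endpoints of the intervals `[t - τ_k^l, t]`, `[t - τ_k, t - τ_k^l]` and
`[t - τ_k^u, t - τ_k]`, whose lengths are given by `coefM`. -/
def delayStart (x : Fin 3) (k : Fin m) : ℝ :=
  if x = 0 then t - D.τl k else if x = 1 then t - τv k else t - D.τu k

/-- The paper's `ζ(t)` for the trajectory `z` and the delay values `τv` at time `t`. -/
noncomputable def augmented : bg m n N → ℝ :=
  ofBlocks (z t) fun q k => Fin.append ![z (t - D.τl k), z (t - D.τu k), z (t - τv k)]
    (fun i => unitMoment (X ^ ((finProdFinEquiv.symm i).2 : ℕ)) z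
      (D.delayStart τv t (finProdFinEquiv.symm i).1 k)
      (coefM m D.τl D.τu τv (finProdFinEquiv.symm i).1 k)) q

/-- The Legendre moments of `(ż, z)` over the three delay intervals of each agent. -/
noncomputable def legendreMoments (x : Fin 3) (k : Fin m) : kp m n N → ℝ := fun c =>
  unitMoment (legendreUnit c.1) (fun s => Sum.elim (z' s) (z s)) (D.delayStart τv t x k)
    (coefM m D.τl D.τu τv x k) c.2

theorem eB_one_transpose_mulVec_augmented : (eB m n N 1)ᵀ *ᵥ D.augmented z τv t = z t :=
  eB_one_transpose_mulVec_ofBlocks _ _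

theorem eB_lower_transpose_mulVec_augmented (k : Fin m) :
    (eB m n N (k + 2))ᵀ *ᵥ D.augmented z τv t = z (t - D.τl k) := by
  rw [augmented, eB_transpose_mulVec_ofBlocks _ _ (Fin.castAdd _ 0) k (by simp)]
  simp only [Fin.append_left, cons_val]

theorem eB_upper_transpose_mulVec_augmented (k : Fin m) :
    (eB m n N (m + k + 2))ᵀ *ᵥ D.augmented z τv t = z (t - D.τu k) := by
  rw [augmented, eB_transpose_mulVec_ofBlocks _ _ (Fin.castAdd _ 1) k (by simp)]
  simp only [Fin.append_left, cons_val]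

theorem eB_delayed_transpose_mulVec_augmented (k : Fin m) :
    (eB m n N (2 * m + k + 2))ᵀ *ᵥ D.augmented z τv t = z (t - τv k) := by
  rw [augmented, eB_transpose_mulVec_ofBlocks _ _ (Fin.castAdd _ 2) k (by simp)]
  simp only [Fin.append_left, cons_val]

theorem eEven_transpose_mulVec_augmented (x : Fin 3) (k : Fin m) {i : ℕ} (hi : i < N) :
    (eEven m n N x k i)ᵀ *ᵥ D.augmented z τv t
      = unitMoment (X ^ i) z (D.delayStart τv t x k) (coefM m D.τl D.τu τv x k) := by
  have eEven_eq : eEven m n N x k i = eB m n N ((3 + i + x * N) * m + k + 2) := by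
    fin_cases x <;> simp [eEven]
  have position : (3 + i + x * N) * m + k + 2
      = (Fin.natAdd 3 (finProdFinEquiv (x, (⟨i, hi⟩ : Fin N))) : ℕ) * m + k + 2 := by
    rw [Fin.val_natAdd, finProdFinEquiv_apply_val]
    ring
  rw [eEven_eq, augmented, eB_transpose_mulVec_ofBlocks _ _ _ k position]
  simp only [Fin.append_right, Equiv.symm_apply_apply]

theorem dotProduct_self_le_augmented :
    z t ⬝ᵥ z t ≤ D.augmented z τv t ⬝ᵥ D.augmented z τv t :=
  dotProduct_self_le_ofBlocks _ _

theorem dynRow_transpose_mulVec_augmented :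
    (dynRow m n r N D.A D.adj D.B D.K)ᵀ *ᵥ D.augmented z τv t
      = Abar m n D.A *ᵥ z t - ∑ k, Bbar m n r D.adj D.B D.K k *ᵥ z (t - τv k) := by
  simp only [dynRow, transpose_sub, transpose_mul, transpose_transpose, sub_mulVec, transpose_sum,
    sum_mulVec, ← mulVec_mulVec, eB_one_transpose_mulVec_augmented,
    eB_delayed_transpose_mulVec_augmented]

theorem Pi2_transpose_mulVec_augmented (k : Fin m) :
    (Pi2 m n r N D.A D.adj D.B D.K k)ᵀ *ᵥ D.augmented z τv t = Function.uncurry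
      ![(dynRow m n r N D.A D.adj D.B D.K)ᵀ *ᵥ D.augmented z τv t,
        z t - z (t - D.τl k), z (t - D.τl k) - z (t - D.τu k)] := by
  rw [← D.eB_one_transpose_mulVec_augmented z τv t, ← D.eB_lower_transpose_mulVec_augmented z τv t,
    ← D.eB_upper_transpose_mulVec_augmented z τv t, ← sub_mulVec, ← sub_mulVec]
  ext ⟨x, c⟩
  fin_cases x <;> simp [mulVec, dotProduct, Pi2]

theorem Pi3_transpose_mulVec_augmented :
    (Pi3 m n r N D.A D.adj D.B D.K)ᵀ *ᵥ D.augmented z τv t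
      = Sum.elim ((dynRow m n r N D.A D.adj D.B D.K)ᵀ *ᵥ D.augmented z τv t) (z t) := by
  rw [← D.eB_one_transpose_mulVec_augmented z τv t]
  ext (c | c) <;> simp [mulVec, dotProduct, Pi3]

variable {z z'}

theorem Pi1_transpose_mulVec_augmented (hN : 1 ≤ N) (hz : Continuous z) (k : Fin m) :
    (Pi1 m n N D.τl D.τu τv k)ᵀ *ᵥ D.augmented z τv t = Function.uncurry
      ![z t, ∫ s in (t - D.τl k)..t, z s, ∫ s in (t - D.τu k)..(t - D.τl k), z s] := by
  have mean : ∀ x, coefM m D.τl D.τu τv x k • (eEven m n N x k 0)ᵀ *ᵥ D.augmented z τv t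
      = ∫ s in D.delayStart τv t x k..D.delayStart τv t x k + coefM m D.τl D.τu τv x k, z s :=
    fun x => by
      rw [D.eEven_transpose_mulVec_augmented z τv t x k hN, pow_zero, smul_unitMoment_one]
  have present := mean 0
  have recent := mean 1
  have old := mean 2
  simp only [coefM, delayStart, eEven, Fin.reduceEq, if_true, if_false, sub_add_sub_cancel,
    sub_add_cancel, add_zero] at present recent old
  rw [← D.eB_one_transpose_mulVec_augmented z τv t, ← present,
    ← intervalIntegral.integral_add_adjacent_intervals (hz.intervalIntegrable _ (t - τv k))
      (hz.intervalIntegrable _ _), ← recent, ← old, add_comm (_ • _)]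
  ext ⟨x, c⟩
  fin_cases x <;>
    simp [mulVec, dotProduct, Pi1, Finset.mul_sum, mul_assoc, add_mul, Finset.sum_add_distrib]

theorem rho_transpose_mulVec_augmented (hz : ∀ s, HasDerivAt z (z' s) s) (hz' : Continuous z')
    (x : Fin 3) (k : Fin m) {i : ℕ} (hi : i ≤ N) :
    (rho m n N x k i)ᵀ *ᵥ D.augmented z τv t = coefM m D.τl D.τu τv x k •
      unitMoment (X ^ i) z' (D.delayStart τv t x k) (coefM m D.τl D.τu τv x k) := by
  rcases i with _ | i
  · rw [pow_zero, smul_unitMoment_one_deriv hz hz']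
    fin_cases x <;> simp [rho, coefM, delayStart, sub_mulVec, eB_one_transpose_mulVec_augmented,
      eB_lower_transpose_mulVec_augmented, eB_upper_transpose_mulVec_augmented,
      eB_delayed_transpose_mulVec_augmented]
  · have shift : 2 + (i + 1) = 3 + i := by ring
    rw [smul_unitMoment_X_pow_succ_deriv hz hz', ← D.eEven_transpose_mulVec_augmented z τv t x k hi]
    fin_cases x <;> simp [rho, coefM, delayStart, eEven, shift, sub_mulVec, smul_mulVec,
      eB_one_transpose_mulVec_augmented, eB_lower_transpose_mulVec_augmented,
      eB_delayed_transpose_mulVec_augmented]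

theorem Modd_transpose_mulVec_augmented (hz : ∀ s, HasDerivAt z (z' s) s) (hz' : Continuous z')
    (x : Fin 3) (k : Fin m) {j : ℕ} (hj : j ≤ N) :
    (Modd m n N x k (j + 1))ᵀ *ᵥ D.augmented z τv t = coefM m D.τl D.τu τv x k •
      unitMoment (legendreUnit j) z' (D.delayStart τv t x k) (coefM m D.τl D.τu τv x k) := by
  rw [Modd, transpose_sum, sum_mulVec, unitMoment_legendreUnit hz', Finset.smul_sum]
  refine Finset.sum_congr rfl fun i hi => ?_
  rw [transpose_smul, smul_mulVec, D.rho_transpose_mulVec_augmented τv t hz hz' x k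
    ((Finset.mem_range_succ_iff.1 hi).trans hj), smul_comm]

theorem Meven_transpose_mulVec_augmented (hz : Continuous z) (x : Fin 3) (k : Fin m) {j : ℕ}
    (hj : j < N) :
    (Meven m n N D.τl D.τu τv x k (j + 1))ᵀ *ᵥ D.augmented z τv t = coefM m D.τl D.τu τv x k •
      unitMoment (legendreUnit j) z (D.delayStart τv t x k) (coefM m D.τl D.τu τv x k) := by
  rw [Meven, transpose_smul, smul_mulVec, transpose_sum, sum_mulVec, unitMoment_legendreUnit hz]
  refine congrArg _ (Finset.sum_congr rfl fun i hi => ?_)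
  rw [transpose_smul, smul_mulVec, D.eEven_transpose_mulVec_augmented z τv t x k
    ((Finset.mem_range_succ_iff.1 hi).trans_lt hj)]

/-- The free matrices cost nothing along a trajectory: `M̄ᵀζ` is the vector of scaled Legendre
moments, except in the last even slot, where `Ȳ` vanishes. -/
theorem Yb_dotProduct_Mb_sub_legendreMoments_eq_zero (hz : ∀ s, HasDerivAt z (z' s) s)
    (hz' : Continuous z') (x : Fin 3) (k : Fin m) (ζ : bg m n N → ℝ) :
    ((Yb m n N D.Y x k)ᵀ *ᵥ ζ) ⬝ᵥ ((Mb m n N D.τl D.τu τv x k)ᵀ *ᵥ D.augmented z τv t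
      - coefM m D.τl D.τu τv x k • D.legendreMoments z z' τv t x k) = 0 := by
  have hzc : Continuous z := continuous_iff_continuousAt.2 fun s => (hz s).continuousAt
  have hξ := continuous_sumElim_pi hz' hzc
  refine Finset.sum_eq_zero ?_
  rintro ⟨j, c | c⟩ -
  · refine mul_eq_zero_of_right _ (sub_eq_zero.2 ?_)
    calc _ = ((Modd m n N x k (j + 1))ᵀ *ᵥ D.augmented z τv t) c := by
          simp only [mulVec, dotProduct, transpose_apply, Mb]
      _ = _ := by
          rw [D.Modd_transpose_mulVec_augmented τv t hz hz' x k (Fin.is_le j)]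
          simp only [Pi.smul_apply, legendreMoments, unitMoment_apply hξ, unitMoment_apply hz',
            Sum.elim_inl]
  · rcases lt_or_ge (j : ℕ) N with hj | hj
    · refine mul_eq_zero_of_right _ (sub_eq_zero.2 ?_)
      calc _ = ((Meven m n N D.τl D.τu τv x k (j + 1))ᵀ *ᵥ D.augmented z τv t) c := by
            simp only [mulVec, dotProduct, transpose_apply, Mb, hj, if_true]
        _ = _ := by
            rw [D.Meven_transpose_mulVec_augmented τv t hzc x k hj]
            simp only [Pi.smul_apply, legendreMoments, unitMoment_apply hξ, unitMoment_apply hzc,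
              Sum.elim_inr]
    · refine mul_eq_zero_of_left ?_ _
      have last_slot : ¬2 * (j : ℕ) + 1 < 2 * N + 1 := by omega
      simp only [mulVec, dotProduct, transpose_apply, Yb, last_slot, dif_neg, not_false_eq_true,
        zero_mul, Finset.sum_const_zero]

end LMIData

/-! ### The Lyapunov–Krasovskii functional -/

section Window

theorem hasDerivAt_integral_window {E : Type*} [NormedAddCommGroup E] [NormedSpace ℝ E]
    [CompleteSpace E] {f : ℝ → E} (hf : Continuous f) (a b t : ℝ) :
    HasDerivAt (fun t => ∫ s in (t - a)..(t - b), f s) (f (t - b) - f (t - a)) t := by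
  have primitive : ∀ c, HasDerivAt (fun t => ∫ s in 0..(t - c), f s) (f (t - c)) t := fun c =>
    (hf.integral_hasStrictDerivAt 0 (t - c)).hasDerivAt.comp_sub_const t c
  refine ((primitive b).sub (primitive a)).congr_of_eventuallyEq (.of_forall fun t => ?_)
  exact (intervalIntegral.integral_interval_sub_left (hf.intervalIntegrable _ _)
    (hf.intervalIntegrable _ _)).symm

theorem hasDerivAt_integral_integral_window {f : ℝ → ℝ} (hf : Continuous f) (a b t : ℝ) :
    HasDerivAt (fun t => ∫ s in (t - a)..(t - b), ∫ r in s..t, f r)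
      ((a - b) * f t - ∫ s in (t - a)..(t - b), f s) t := by
  set F : ℝ → ℝ := fun t => ∫ s in 0..t, f s
  have hF : ∀ t, HasDerivAt F (f t) t := fun t => (hf.integral_hasStrictDerivAt 0 t).hasDerivAt
  have hFc : Continuous F := continuous_iff_continuousAt.2 fun t => (hF t).continuousAt
  have inner : ∀ s t, ∫ r in s..t, f r = F t - F s := fun s t =>
    (intervalIntegral.integral_interval_sub_left (hf.intervalIntegrable _ _)
      (hf.intervalIntegrable _ _)).symm
  have outer : ∀ t, ∫ s in (t - a)..(t - b), ∫ r in s..t, f r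
      = (a - b) * F t - ∫ s in (t - a)..(t - b), F s := fun t => by
    simp only [inner]
    rw [intervalIntegral.integral_sub intervalIntegrable_const (hFc.intervalIntegrable _ _),
      intervalIntegral.integral_const, smul_eq_mul]
    ring
  rw [inner]
  exact (((hF t).const_mul (a - b)).sub
    (hasDerivAt_integral_window hFc a b t)).congr_of_eventuallyEq (.of_forall outer)

theorem integral_integral_nonneg_of_le {f : ℝ → ℝ} (hf : ∀ s, 0 ≤ f s) {a b t : ℝ} (hab : a ≤ b)
    (hbt : b ≤ t) : 0 ≤ ∫ s in a..b, ∫ r in s..t, f r :=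
  intervalIntegral.integral_nonneg hab fun _ hs =>
    intervalIntegral.integral_nonneg (hs.2.trans hbt) fun r _ => hf r

end Window

namespace LMIData

variable {m n r N : ℕ} (D : LMIData m n r N) (z z' : ℝ → ag m n → ℝ) (k : Fin m) (t : ℝ)

/-- The state of agent `k` on which `P_k` acts in the Lyapunov–Krasovskii functional: `z(t)` and
the integrals of `z` over the windows `[t - τ_k^l, t]` and `[t - τ_k^u, t - τ_k^l]`. -/
noncomputable def integralState : Fin 3 × ag m n → ℝ := Function.uncurry
  ![z t, ∫ s in (t - D.τl k)..t, z s, ∫ s in (t - D.τu k)..(t - D.τl k), z s]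

/-- The part of the Lyapunov–Krasovskii functional due to agent `k`, where `z'` stands for `ż`. -/
noncomputable def agentFunctional : ℝ :=
  D.integralState z k t ⬝ᵥ D.P k *ᵥ D.integralState z k t
    + (∫ s in (t - D.τl k)..t, z s ⬝ᵥ D.Q1 k *ᵥ z s)
    + (∫ s in (t - D.τu k)..(t - D.τl k), z s ⬝ᵥ D.Q2 k *ᵥ z s)
    + (∫ s in (t - D.τl k)..t, ∫ r in s..t,
        Sum.elim (z' r) (z r) ⬝ᵥ D.R1 k *ᵥ Sum.elim (z' r) (z r))
    + ∫ s in (t - D.τu k)..(t - D.τl k), ∫ r in s..t,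
        Sum.elim (z' r) (z r) ⬝ᵥ D.R2 k *ᵥ Sum.elim (z' r) (z r)

/-- The derivative of `agentFunctional` along a trajectory. -/
noncomputable def agentFunctionalDeriv : ℝ :=
  2 * (Function.uncurry ![z' t, z t - z (t - D.τl k), z (t - D.τl k) - z (t - D.τu k)]
      ⬝ᵥ D.P k *ᵥ D.integralState z k t)
    + (z t ⬝ᵥ D.Q1 k *ᵥ z t - z (t - D.τl k) ⬝ᵥ D.Q1 k *ᵥ z (t - D.τl k))
    + (z (t - D.τl k) ⬝ᵥ D.Q2 k *ᵥ z (t - D.τl k) - z (t - D.τu k) ⬝ᵥ D.Q2 k *ᵥ z (t - D.τu k))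
    + (D.τl k * (Sum.elim (z' t) (z t) ⬝ᵥ D.R1 k *ᵥ Sum.elim (z' t) (z t))
      - ∫ s in (t - D.τl k)..t, Sum.elim (z' s) (z s) ⬝ᵥ D.R1 k *ᵥ Sum.elim (z' s) (z s))
    + ((D.τu k - D.τl k) * (Sum.elim (z' t) (z t) ⬝ᵥ D.R2 k *ᵥ Sum.elim (z' t) (z t))
      - ∫ s in (t - D.τu k)..(t - D.τl k),
          Sum.elim (z' s) (z s) ⬝ᵥ D.R2 k *ᵥ Sum.elim (z' s) (z s))

variable {z z'}

theorem hasDerivAt_integralState (hz : ∀ s, HasDerivAt z (z' s) s) :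
    HasDerivAt (D.integralState z k)
      (Function.uncurry ![z' t, z t - z (t - D.τl k), z (t - D.τl k) - z (t - D.τu k)]) t := by
  have hzc : Continuous z := continuous_iff_continuousAt.2 fun s => (hz s).continuousAt
  refine hasDerivAt_pi.2 ?_
  rintro ⟨x, c⟩
  fin_cases x
  · exact hasDerivAt_pi.1 (hz t) c
  · have window := hasDerivAt_integral_window hzc (D.τl k) 0 t
    simp only [sub_zero] at window
    exact hasDerivAt_pi.1 window c
  · exact hasDerivAt_pi.1 (hasDerivAt_integral_window hzc (D.τu k) (D.τl k) t) c

theorem hasDerivAt_agentFunctional (hP : (D.P k).IsHermitian) (hz : ∀ s, HasDerivAt z (z' s) s)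
    (hz' : Continuous z') :
    HasDerivAt (D.agentFunctional z z' k) (D.agentFunctionalDeriv z z' k t) t := by
  have hzc : Continuous z := continuous_iff_continuousAt.2 fun s => (hz s).continuousAt
  have hξ := continuous_sumElim_pi hz' hzc
  have quad_continuous : ∀ {κ : Type} [Fintype κ] (M : Matrix κ κ ℝ) {y : ℝ → κ → ℝ},
      Continuous y → Continuous fun s => y s ⬝ᵥ M *ᵥ y s := fun M y hy =>
    hy.dotProduct (continuous_const.matrix_mulVec hy)
  have windowQ1 := hasDerivAt_integral_window (quad_continuous (D.Q1 k) hzc) (D.τl k) 0 t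
  have windowR1 := hasDerivAt_integral_integral_window (quad_continuous (D.R1 k) hξ) (D.τl k) 0 t
  simp only [sub_zero] at windowQ1 windowR1
  exact ((((hasDerivAt_dotProduct_mulVec_self hP (D.hasDerivAt_integralState k t hz)).add
    windowQ1).add (hasDerivAt_integral_window (quad_continuous (D.Q2 k) hzc) _ _ t)).add
    windowR1).add (hasDerivAt_integral_integral_window (quad_continuous (D.R2 k) hξ) _ _ t)

theorem dotProduct_self_le_integralState :
    z t ⬝ᵥ z t ≤ D.integralState z k t ⬝ᵥ D.integralState z k t := by
  simp only [integralState, dotProduct, Fintype.sum_prod_type (α₁ := Fin 3),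
    Fin.sum_univ_succ (n := 2), Function.uncurry_apply_pair, cons_val_zero]
  exact le_add_of_nonneg_right (Finset.sum_nonneg fun _ _ => dotProduct_self_nonneg _)

theorem integralState_le_agentFunctional (hQ1 : (D.Q1 k).PosSemidef) (hQ2 : (D.Q2 k).PosSemidef)
    (hR1 : (D.R1 k).PosSemidef) (hR2 : (D.R2 k).PosSemidef) (hl : 0 ≤ D.τl k)
    (hlu : D.τl k ≤ D.τu k) :
    D.integralState z k t ⬝ᵥ D.P k *ᵥ D.integralState z k t ≤ D.agentFunctional z z' k t := by
  have hl' : t - D.τl k ≤ t := sub_le_self t hl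
  have hlu' : t - D.τu k ≤ t - D.τl k := sub_le_sub_left hlu t
  have hQ1_nonneg := intervalIntegral.integral_nonneg (μ := MeasureTheory.volume) hl' fun s _ =>
    dotProduct_mulVec_self_nonneg hQ1 (z s)
  have hQ2_nonneg := intervalIntegral.integral_nonneg (μ := MeasureTheory.volume) hlu' fun s _ =>
    dotProduct_mulVec_self_nonneg hQ2 (z s)
  have hR1_nonneg := integral_integral_nonneg_of_le
    (fun s => dotProduct_mulVec_self_nonneg hR1 (Sum.elim (z' s) (z s))) hl' le_rfl
  have hR2_nonneg := integral_integral_nonneg_of_le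
    (fun s => dotProduct_mulVec_self_nonneg hR2 (Sum.elim (z' s) (z s))) hlu' hl'
  rw [agentFunctional]
  linarith

theorem coefM_mul_legendreQuad_legendreMoments_le {R : Matrix (ag m n ⊕ ag m n) (ag m n ⊕ ag m n) ℝ}
    (hR : R.PosSemidef) (hz : Continuous z) (hz' : Continuous z') {τv : Fin m → ℝ} {x : Fin 3}
    (hx : 0 ≤ coefM m D.τl D.τu τv x k) :
    coefM m D.τl D.τu τv x k * legendreQuad R (D.legendreMoments z z' τv t x k)
      ≤ ∫ s in D.delayStart τv t x k..D.delayStart τv t x k + coefM m D.τl D.τu τv x k,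
        Sum.elim (z' s) (z s) ⬝ᵥ R *ᵥ Sum.elim (z' s) (z s) :=
  mul_sum_unitMoment_legendreUnit_le hR (continuous_sumElim_pi hz' hz) (N + 1) _ hx

theorem agentFunctionalDeriv_le_rate (hN : 1 ≤ N) (hz : ∀ s, HasDerivAt z (z' s) s)
    (hz' : Continuous z') (hR1 : (D.R1 k).PosSemidef) (hR2 : (D.R2 k).PosSemidef)
    (hl : 0 ≤ D.τl k) {τv : Fin m → ℝ} (hτv : D.τl k ≤ τv k ∧ τv k ≤ D.τu k)
    (hdyn : z' t = Abar m n D.A *ᵥ z t - ∑ l, Bbar m n r D.adj D.B D.K l *ᵥ z (t - τv l)) :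
    D.agentFunctionalDeriv z z' k t
      ≤ D.rate (D.augmented z τv t) (D.legendreMoments z z' τv t) τv k := by
  have hzc : Continuous z := continuous_iff_continuousAt.2 fun s => (hz s).continuousAt
  have hξ := continuous_sumElim_pi hz' hzc
  have hquad : Continuous fun s => Sum.elim (z' s) (z s) ⬝ᵥ D.R2 k *ᵥ Sum.elim (z' s) (z s) :=
    hξ.dotProduct (continuous_const.matrix_mulVec hξ)
  have present := D.coefM_mul_legendreQuad_legendreMoments_le k t (τv := τv) (x := 0) hR1 hzc hz'
    (by simpa [coefM] using hl)
  have recent := D.coefM_mul_legendreQuad_legendreMoments_le k t (τv := τv) (x := 1) hR2 hzc hz'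
    (by simpa [coefM] using hτv.1)
  have old := D.coefM_mul_legendreQuad_legendreMoments_le k t (τv := τv) (x := 2) hR2 hzc hz'
    (by simpa [coefM] using hτv.2)
  simp only [coefM, delayStart, Fin.reduceEq, if_true, if_false, sub_add_sub_cancel,
    sub_add_cancel] at present recent old
  rw [rate, Pi1_transpose_mulVec_augmented D τv t hN hzc, Pi2_transpose_mulVec_augmented,
    Pi3_transpose_mulVec_augmented, dynRow_transpose_mulVec_augmented, ← hdyn,
    eB_one_transpose_mulVec_augmented, eB_lower_transpose_mulVec_augmented,
    eB_upper_transpose_mulVec_augmented, agentFunctionalDeriv, integralState,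
    ← intervalIntegral.integral_add_adjacent_intervals
      (hquad.intervalIntegrable (t - D.τu k) (t - τv k)) (hquad.intervalIntegrable _ _)]
  simp only [D.Yb_dotProduct_Mb_sub_legendreMoments_eq_zero τv t hz hz', Fin.sum_univ_three]
  simp only [coefM, Fin.reduceEq, if_true, if_false, add_mulVec, sub_mulVec, smul_mulVec,
    dotProduct_add, dotProduct_sub, dotProduct_smul, smul_eq_mul]
  linarith

end LMIData

/-! ### Convergence -/

section Barbalat

open Filter MeasureTheory Set Topology

theorem integrableOn_Ioi_of_hasDerivAt_le_neg_mul {V V' f : ℝ → ℝ} {ε : ℝ} (hε : 0 < ε)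
    (hV : ∀ t, HasDerivAt V (V' t) t) (hV_nonneg : ∀ t, 0 ≤ V t) (hf : Continuous f)
    (hf_nonneg : ∀ t, 0 ≤ f t) (hVf : ∀ t, V' t ≤ -(ε * f t)) (a : ℝ) :
    IntegrableOn f (Ioi a) := by
  have hV'_nonpos : ∀ t, V' t ≤ 0 := fun t =>
    (hVf t).trans (neg_nonpos.2 (mul_nonneg hε.le (hf_nonneg t)))
  have hV_tendsto := tendsto_atTop_ciInf (antitone_of_hasDerivAt_nonpos hV hV'_nonpos)
    ⟨0, forall_mem_range.2 hV_nonneg⟩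
  have hV'_int : IntegrableOn V' (Ioi a) :=
    integrableOn_Ioi_deriv_of_nonpos' (fun t _ => hV t) (fun t _ => hV'_nonpos t) hV_tendsto
  refine (hV'_int.neg.const_mul ε⁻¹).mono' hf.aestronglyMeasurable (.of_forall fun t => ?_)
  rw [Real.norm_of_nonneg (hf_nonneg t), Pi.neg_apply, le_inv_mul_iff₀ hε]
  exact le_neg_of_le_neg (hVf t)

/-- A form of Barbalat's lemma: `f²` has an integrable derivative, hence a limit. -/
theorem tendsto_zero_of_integrableOn_Ioi_of_abs_deriv_le {f f' : ℝ → ℝ} {a C : ℝ}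
    (hf : ∀ t ∈ Ioi a, HasDerivAt f (f' t) t) (hf_int : IntegrableOn f (Ioi a))
    (hf'_le : ∀ t ∈ Ioi a, |f' t| ≤ C) : Tendsto f atTop (𝓝 0) := by
  have hf'_meas : AEStronglyMeasurable f' (volume.restrict (Ioi a)) :=
    (aestronglyMeasurable_deriv f _).congr
      ((ae_restrict_iff' measurableSet_Ioi).2 (.of_forall fun t ht => (hf t ht).deriv))
  have hf'f_int : IntegrableOn (fun t => f' t * f t) (Ioi a) :=
    hf_int.bdd_mul hf'_meas
      ((ae_restrict_iff' measurableSet_Ioi).2 (.of_forall hf'_le))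
  have hsq_deriv : ∀ t ∈ Ioi a, HasDerivAt (fun t => f t ^ 2) (2 * (f' t * f t)) t := fun t ht => by
    simpa [mul_assoc, mul_comm (f t)] using (hf t ht).fun_pow 2
  have hsq := tendsto_limUnder_of_hasDerivAt_of_integrableOn_Ioi hsq_deriv (hf'f_int.const_mul 2)
  have habs : Tendsto (fun t => |f t|) atTop (𝓝 √(limUnder atTop fun t => f t ^ 2)) :=
    hsq.sqrt.congr fun t => Real.sqrt_sq_eq_abs (f t)
  have habs_int : IntegrableAtFilter (fun t => |f t|) atTop :=
    ⟨Ioi a, Ioi_mem_atTop a, hf_int.abs⟩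
  have hlimit := habs_int.eq_zero_of_tendsto
    (fun s hs => by
      obtain ⟨b, hb⟩ := mem_atTop_sets.1 hs
      exact measure_mono_top hb Real.volume_Ici) habs
  rw [hlimit] at habs
  exact tendsto_zero_iff_abs_tendsto_zero f |>.2 habs

end Barbalat

section DotProductNorm

variable {κ : Type*} [Fintype κ]

theorem sq_norm_le_dotProduct_self (v : κ → ℝ) : ‖v‖ ^ 2 ≤ v ⬝ᵥ v := by
  refine (Real.le_sqrt (norm_nonneg v) (dotProduct_self_nonneg v)).1 ?_
  refine (pi_norm_le_iff_of_nonneg (Real.sqrt_nonneg _)).2 fun c => Real.abs_le_sqrt ?_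
  rw [sq]
  exact Finset.single_le_sum (fun i _ => mul_self_nonneg (v i)) (Finset.mem_univ c)

theorem tendsto_zero_of_tendsto_dotProduct_self {X : Type*} {l : Filter X} {f : X → κ → ℝ}
    (hf : Filter.Tendsto (fun s => f s ⬝ᵥ f s) l (nhds 0)) : Filter.Tendsto f l (nhds 0) := by
  refine squeeze_zero_norm (fun s => Real.le_sqrt_of_sq_le (sq_norm_le_dotProduct_self (f s))) ?_
  simpa only [Real.sqrt_zero] using hf.sqrt

theorem abs_dotProduct_le_card_mul (v w : κ → ℝ) :
    |v ⬝ᵥ w| ≤ Fintype.card κ * (‖v‖ * ‖w‖) := by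
  refine (Finset.abs_sum_le_sum_abs _ _).trans ?_
  rw [← nsmul_eq_mul]
  refine Finset.sum_le_card_nsmul _ _ _ fun c _ => ?_
  rw [abs_mul]
  exact mul_le_mul (norm_le_pi_norm v c) (norm_le_pi_norm w c) (abs_nonneg _) (norm_nonneg _)

end DotProductNorm

namespace LMIData

open Filter

variable {m n r N : ℕ} (D : LMIData m n r N) (τ : Fin m → ℝ → ℝ) (z z' : ℝ → ag m n → ℝ)

/-- The right-hand side of the error dynamics `ż(t) = Ā z(t) - ∑ k, B̄_k z(t - τ_k(t))`. -/
def errorField (t : ℝ) : ag m n → ℝ :=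
  Abar m n D.A *ᵥ z t - ∑ k, Bbar m n r D.adj D.B D.K k *ᵥ z (t - τ k t)

/-- The hypotheses of the criterion on its matrices and delay bounds. -/
structure Feasible : Prop where
  lower_nonneg : ∀ k, 0 ≤ D.τl k
  lower_le_upper : ∀ k, D.τl k ≤ D.τu k
  posDef_P : ∀ k, (D.P k).PosDef
  posDef_Q1 : ∀ k, (D.Q1 k).PosDef
  posDef_Q2 : ∀ k, (D.Q2 k).PosDef
  posDef_R1 : ∀ k, (D.R1 k).PosDef
  posDef_R2 : ∀ k, (D.R2 k).PosDef
  posDef_neg_lmi : ∀ τv : Fin m → ℝ, (∀ k, τv k = D.τl k ∨ τv k = D.τu k) → (-D.lmi τv).PosDef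

/-- The Lyapunov–Krasovskii functional. -/
noncomputable def lyapunov (t : ℝ) : ℝ := ∑ k, D.agentFunctional z z' k t

variable {D τ z z'}

theorem continuous_errorField (hτ : ∀ k, Continuous (τ k)) (hz : Continuous z) :
    Continuous (D.errorField τ z) := by
  unfold errorField
  fun_prop

open scoped Matrix.Norms.Operator in
theorem norm_errorField_le {a C t : ℝ} (hz : ∀ s, a ≤ s → ‖z s‖ ≤ C) (ht : a ≤ t)
    (hτ : ∀ k, a ≤ t - τ k t) :
    ‖D.errorField τ z t‖ ≤ (‖Abar m n D.A‖ + ∑ k, ‖Bbar m n r D.adj D.B D.K k‖) * C := by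
  have apply_le : ∀ (M : Matrix (ag m n) (ag m n) ℝ) {s}, a ≤ s → ‖M *ᵥ z s‖ ≤ ‖M‖ * C :=
    fun M s hs => (linfty_opNorm_mulVec M (z s)).trans
      (mul_le_mul_of_nonneg_left (hz s hs) (norm_nonneg M))
  rw [add_mul, Finset.sum_mul]
  exact (norm_sub_le _ _).trans <| add_le_add (apply_le _ ht) <|
    (norm_sum_le _ _).trans <| Finset.sum_le_sum fun k _ => apply_le _ (hτ k)

theorem hasDerivAt_lyapunov (hD : D.Feasible) (hz : ∀ s, HasDerivAt z (z' s) s)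
    (hz' : Continuous z') (t : ℝ) :
    HasDerivAt (D.lyapunov z z') (∑ k, D.agentFunctionalDeriv z z' k t) t :=
  HasDerivAt.fun_sum fun k _ => D.hasDerivAt_agentFunctional k t (hD.posDef_P k).1 hz hz'

theorem integralState_le_lyapunov (hD : D.Feasible) (k : Fin m) (t : ℝ) :
    D.integralState z k t ⬝ᵥ D.P k *ᵥ D.integralState z k t ≤ D.lyapunov z z' t := by
  have le_agent : ∀ l, D.integralState z l t ⬝ᵥ D.P l *ᵥ D.integralState z l t
      ≤ D.agentFunctional z z' l t := fun l =>
    D.integralState_le_agentFunctional l t (hD.posDef_Q1 l).posSemidef (hD.posDef_Q2 l).posSemidef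
      (hD.posDef_R1 l).posSemidef (hD.posDef_R2 l).posSemidef (hD.lower_nonneg l)
      (hD.lower_le_upper l)
  exact (le_agent k).trans <| Finset.single_le_sum (fun l _ =>
    (dotProduct_mulVec_self_nonneg (hD.posDef_P l).posSemidef _).trans (le_agent l))
    (Finset.mem_univ k)

theorem exists_mul_dotProduct_self_le_lyapunov (hD : D.Feasible) (k : Fin m) :
    ∃ c > 0, ∀ t, c * (z t ⬝ᵥ z t) ≤ D.lyapunov z z' t := by
  obtain ⟨c, hc, hP⟩ := exists_forall_mul_dotProduct_self_le (hD.posDef_P k)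
  exact ⟨c, hc, fun t => (mul_le_mul_of_nonneg_left (D.dotProduct_self_le_integralState k t)
    hc.le).trans <| (hP _).trans <| integralState_le_lyapunov hD k t⟩

theorem exists_sum_agentFunctionalDeriv_le (hD : D.Feasible) (hN : 1 ≤ N)
    (hτ : ∀ k, Continuous (τ k)) (hτ_mem : ∀ k t, D.τl k ≤ τ k t ∧ τ k t ≤ D.τu k)
    (hz : ∀ t, HasDerivAt z (D.errorField τ z t) t) :
    ∃ ε > 0, ∀ t, ∑ k, D.agentFunctionalDeriv z (D.errorField τ z) k t ≤ -(ε * (z t ⬝ᵥ z t)) := by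
  have hzc : Continuous z := continuous_iff_continuousAt.2 fun s => (hz s).continuousAt
  obtain ⟨ε, hε, hrate⟩ := D.exists_sum_rate_le hD.posDef_neg_lmi
  refine ⟨ε, hε, fun t => ?_⟩
  calc ∑ k, D.agentFunctionalDeriv z (D.errorField τ z) k t
      ≤ ∑ k, D.rate (D.augmented z (τ · t) t)
          (D.legendreMoments z (D.errorField τ z) (τ · t) t) (τ · t) k :=
        Finset.sum_le_sum fun k _ => D.agentFunctionalDeriv_le_rate k t hN hz
          (continuous_errorField hτ hzc) (hD.posDef_R1 k).posSemidef (hD.posDef_R2 k).posSemidef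
          (hD.lower_nonneg k) (hτ_mem k t) rfl
    _ ≤ -(ε * (D.augmented z (τ · t) t ⬝ᵥ D.augmented z (τ · t) t)) :=
        hrate _ _ _ fun k => hτ_mem k t
    _ ≤ -(ε * (z t ⬝ᵥ z t)) :=
        neg_le_neg (mul_le_mul_of_nonneg_left (D.dotProduct_self_le_augmented z _ t) hε.le)

theorem exists_norm_le_of_antitone_lyapunov (hD : D.Feasible) (k : Fin m)
    (hanti : Antitone (D.lyapunov z z')) (a : ℝ) : ∃ C, ∀ t, a ≤ t → ‖z t‖ ≤ C := by
  obtain ⟨c, hc, hle⟩ := exists_mul_dotProduct_self_le_lyapunov (z := z) (z' := z') hD k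
  refine ⟨√(D.lyapunov z z' a / c), fun t ht => Real.le_sqrt_of_sq_le ?_⟩
  rw [le_div_iff₀' hc]
  exact (mul_le_mul_of_nonneg_left (sq_norm_le_dotProduct_self _) hc.le).trans
    ((hle t).trans (hanti ht))

open scoped Matrix.Norms.Operator in
theorem exists_abs_errorField_dotProduct_le (hz : ∀ a, ∃ C, ∀ t, a ≤ t → ‖z t‖ ≤ C)
    (hτ : ∀ k t, τ k t ≤ D.τu k) : ∃ C, ∀ t, 0 < t → |D.errorField τ z t ⬝ᵥ z t| ≤ C := by
  obtain ⟨h, hh⟩ := Set.finite_range D.τu |>.bddAbove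
  obtain ⟨C, hC⟩ := hz (min 0 (-h))
  refine ⟨Fintype.card (ag m n) * ((‖Abar m n D.A‖ + ∑ k, ‖Bbar m n r D.adj D.B D.K k‖) * C * C),
    fun t ht => (abs_dotProduct_le_card_mul _ _).trans ?_⟩
  have hmem : min 0 (-h) ≤ t := (min_le_left _ _).trans ht.le
  have hdelayed : ∀ k, min 0 (-h) ≤ t - τ k t := fun k => by
    have hk : D.τu k ≤ h := hh (Set.mem_range_self k)
    linarith [min_le_right 0 (-h), hτ k t]
  have hfield := norm_errorField_le (D := D) hC hmem hdelayed
  exact mul_le_mul_of_nonneg_left (mul_le_mul hfield (hC t hmem) (norm_nonneg _)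
    ((norm_nonneg _).trans hfield)) (Nat.cast_nonneg _)

theorem tendsto_zero_of_feasible (hD : D.Feasible) (hN : 1 ≤ N) (k : Fin m)
    (hτ : ∀ k, Continuous (τ k)) (hτ_mem : ∀ k t, D.τl k ≤ τ k t ∧ τ k t ≤ D.τu k)
    (hz : ∀ t, HasDerivAt z (D.errorField τ z t) t) : Tendsto z atTop (nhds 0) := by
  have hzc : Continuous z := continuous_iff_continuousAt.2 fun s => (hz s).continuousAt
  have hV := hasDerivAt_lyapunov hD hz (continuous_errorField hτ hzc)
  have hV_nonneg : ∀ t, 0 ≤ D.lyapunov z (D.errorField τ z) t := fun t =>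
    (dotProduct_mulVec_self_nonneg (hD.posDef_P k).posSemidef _).trans
      (integralState_le_lyapunov hD k t)
  obtain ⟨ε, hε, hdecay⟩ := exists_sum_agentFunctionalDeriv_le hD hN hτ hτ_mem hz
  have hanti : Antitone (D.lyapunov z (D.errorField τ z)) :=
    antitone_of_hasDerivAt_nonpos hV fun t => (hdecay t).trans
      (neg_nonpos.2 (mul_nonneg hε.le (dotProduct_self_nonneg _)))
  have hintegrable := integrableOn_Ioi_of_hasDerivAt_le_neg_mul hε hV hV_nonneg (hzc.dotProduct hzc)
    (fun t => dotProduct_self_nonneg (z t)) hdecay 0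
  have hderiv : ∀ t, HasDerivAt (fun t => z t ⬝ᵥ z t) (2 * (D.errorField τ z t ⬝ᵥ z t)) t :=
    fun t => by
      simpa only [one_mulVec] using hasDerivAt_dotProduct_mulVec_self isHermitian_one (hz t)
  obtain ⟨C, hC⟩ := exists_abs_errorField_dotProduct_le
    (exists_norm_le_of_antitone_lyapunov hD k hanti) fun k t => (hτ_mem k t).2
  refine tendsto_zero_of_tendsto_dotProduct_self
    (tendsto_zero_of_integrableOn_Ioi_of_abs_deriv_le (fun t _ => hderiv t) hintegrable (C := 2 * C)
      fun t ht => ?_)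
  rw [abs_mul, abs_two]
  exact mul_le_mul_of_nonneg_left (hC t ht) zero_le_two

end LMIData

/-! ### The error dynamics -/

section Graph

variable {m : ℕ}

/-- Row `i` of `U G` computes `x_i - x_1`. -/
theorem Um_mul_Gm_apply (i j : Fin m) :
    (Um m * Gm m) i j = (if i = j then 1 else 0) - if (j : ℕ) = 0 then 1 else 0 := by
  rw [mul_apply]
  by_cases hi : (i : ℕ) = 0
  · have hUm : ∀ a, Um m i a = 0 := fun a => by simp [Um, hi]
    simp [hUm, Fin.ext_iff, hi, eq_comm]
  · have hUm : ∀ a : Fin (m - 1), a ≠ ⟨i - 1, by omega⟩ → Um m i a = 0 := fun a ha => by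
      refine if_neg fun h => ha (Fin.ext ?_)
      simp only [h, add_tsub_cancel_right]
    rw [Finset.sum_eq_single ⟨i - 1, by omega⟩ (fun a _ ha => by rw [hUm a ha, zero_mul])
      (fun h => absurd (Finset.mem_univ _) h)]
    have hsucc : (i : ℕ) - 1 + 1 = i := Nat.succ_pred_eq_of_ne_zero hi
    simp only [Um, Gm, hsucc, if_true, Fin.ext_iff, eq_comm (a := (i : ℕ))]
    split_ifs <;> simp_all

variable (adj : Fin m → Fin m → ℝ)

theorem sum_Lap_smul {E : Type*} [AddCommGroup E] [Module ℝ E] (k : Fin m) (y : Fin m → E) :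
    ∑ l, Lap m adj k l • y l = ∑ l ∈ Finset.univ.erase k, adj k l • (y k - y l) := by
  have off_diagonal : ∀ l ∈ Finset.univ.erase k, Lap m adj k l • y l = -(adj k l • y l) :=
    fun l hl => by rw [Lap, if_neg (Finset.ne_of_mem_erase hl).symm, neg_smul]
  rw [← Finset.add_sum_erase _ _ (Finset.mem_univ k), Finset.sum_congr rfl off_diagonal, Lap,
    if_pos rfl, Finset.sum_smul, ← Finset.sum_add_distrib]
  exact Finset.sum_congr rfl fun l _ => by rw [smul_sub, sub_eq_add_neg]

theorem Lap_mul_Um_mul_Gm : Lap m adj * Um m * Gm m = Lap m adj := by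
  have row_sum : ∀ k, ∑ l, Lap m adj k l = 0 := fun k => by
    simpa using sum_Lap_smul adj k fun _ => (1 : ℝ)
  ext k j
  rw [Matrix.mul_assoc, mul_apply]
  simp only [Um_mul_Gm_apply, mul_sub]
  rw [Finset.sum_sub_distrib, ← Finset.sum_mul, row_sum]
  simp

end Graph

section ErrorDynamics

variable {m n r N : ℕ}

theorem Abar_mul_Gm_kronecker (A : Matrix (Fin n) (Fin n) ℝ) :
    Abar m n A * (Gm m ⊗ₖ (1 : Matrix (Fin n) (Fin n) ℝ))
      = (Gm m ⊗ₖ (1 : Matrix (Fin n) (Fin n) ℝ)) * ((1 : Matrix (Fin m) (Fin m) ℝ) ⊗ₖ A) := by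
  simp only [Abar, ← mul_kronecker_mul, Matrix.one_mul, Matrix.mul_one]

theorem Bbar_mul_Gm_kronecker (adj : Fin m → Fin m → ℝ) (B : Matrix (Fin n) (Fin r) ℝ)
    (K : Matrix (Fin r) (Fin n) ℝ) (k : Fin m) :
    Bbar m n r adj B K k * (Gm m ⊗ₖ (1 : Matrix (Fin n) (Fin n) ℝ))
      = (Gm m ⊗ₖ (1 : Matrix (Fin n) (Fin n) ℝ)) * ((Em m k * Lap m adj) ⊗ₖ (B * K)) := by
  have hGm : Gm m * Em m k * Lap m adj * Um m * Gm m = Gm m * (Em m k * Lap m adj) := by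
    simp only [Matrix.mul_assoc]
    rw [← Matrix.mul_assoc (Lap m adj), Lap_mul_Um_mul_Gm]
  rw [Bbar, ← mul_kronecker_mul, ← mul_kronecker_mul, Matrix.mul_one, Matrix.one_mul, hGm]

variable (x : Fin m → ℝ → Fin n → ℝ)

/-- The stacked state `(x_1(t), …, x_m(t))`. -/
def stackedState (t : ℝ) : Fin m × Fin n → ℝ := fun p => x p.1 t p.2

/-- The stacked error state `z(t) = (G ⊗ I_n) x(t)`. -/
noncomputable def errorState (t : ℝ) : ag m n → ℝ :=
  (Gm m ⊗ₖ (1 : Matrix (Fin n) (Fin n) ℝ)) *ᵥ stackedState x t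

theorem one_kronecker_mulVec_stackedState (A : Matrix (Fin n) (Fin n) ℝ) (t : ℝ) (i : Fin m)
    (c : Fin n) : (((1 : Matrix (Fin m) (Fin m) ℝ) ⊗ₖ A) *ᵥ stackedState x t) (i, c)
      = (A *ᵥ x i t) c := by
  simp [mulVec, dotProduct, stackedState, Fintype.sum_prod_type (α₁ := Fin m), one_apply]

theorem Em_mul_Lap_kronecker_mulVec_stackedState (adj : Fin m → Fin m → ℝ)
    (B : Matrix (Fin n) (Fin r) ℝ) (K : Matrix (Fin r) (Fin n) ℝ) (k : Fin m) (t : ℝ) (i : Fin m)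
    (c : Fin n) : (((Em m k * Lap m adj) ⊗ₖ (B * K)) *ᵥ stackedState x t) (i, c)
      = if i = k then -(B *ᵥ uCtrl m n r K adj x k t) c else 0 := by
  have hEL : ∀ l, (Em m k * Lap m adj) i l = if i = k then Lap m adj k l else 0 := fun l => by
    simp [mul_apply, Em, ite_and]
  have hu : uCtrl m n r K adj x k t = -(K *ᵥ ∑ l, Lap m adj k l • x l t) := by
    rw [uCtrl, sum_Lap_smul adj k fun l => x l t, mulVec_sum]
    simp only [mulVec_smul]
  split_ifs with hi
  · rw [hu, mulVec_neg, Pi.neg_apply, neg_neg, mulVec_mulVec, mulVec_sum, Finset.sum_apply]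
    simp only [Pi.smul_apply, smul_eq_mul, mulVec, dotProduct, stackedState, hEL, if_pos hi,
      Fintype.sum_prod_type (α₁ := Fin m), kroneckerMap_apply, mul_assoc, mul_left_comm]
  · simp only [mulVec, dotProduct, hEL, if_neg hi, kroneckerMap_apply, zero_mul,
      Finset.sum_const_zero]

theorem Um_kronecker_mulVec_errorState_sub (t : ℝ) (i j : Fin m) (c : Fin n) :
    ((Um m ⊗ₖ (1 : Matrix (Fin n) (Fin n) ℝ)) *ᵥ errorState x t) (i, c)
      - ((Um m ⊗ₖ (1 : Matrix (Fin n) (Fin n) ℝ)) *ᵥ errorState x t) (j, c)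
      = x i t c - x j t c := by
  rw [errorState, mulVec_mulVec, ← mul_kronecker_mul, Matrix.one_mul]
  simp [mulVec, dotProduct, stackedState, Fintype.sum_prod_type (α₁ := Fin m), Um_mul_Gm_apply,
    sub_mul, Finset.sum_sub_distrib, one_apply]

variable {x}

theorem hasDerivAt_errorState (D : LMIData m n r N) {τ : Fin m → ℝ → ℝ}
    (hx : ∀ k t, HasDerivAt (x k)
      (D.A *ᵥ x k t + D.B *ᵥ uCtrl m n r D.K D.adj x k (t - τ k t)) t) (t : ℝ) :
    HasDerivAt (errorState x) (D.errorField τ (errorState x) t) t := by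
  have hstacked : HasDerivAt (stackedState x)
      (((1 : Matrix (Fin m) (Fin m) ℝ) ⊗ₖ D.A) *ᵥ stackedState x t
        - ∑ k, ((Em m k * Lap m D.adj) ⊗ₖ (D.B * D.K)) *ᵥ stackedState x (t - τ k t)) t := by
    refine hasDerivAt_pi.2 ?_
    rintro ⟨i, c⟩
    refine (hasDerivAt_pi.1 (hx i t) c).congr_deriv ?_
    simp only [Pi.sub_apply, Pi.add_apply, Finset.sum_apply, one_kronecker_mulVec_stackedState,
      Em_mul_Lap_kronecker_mulVec_stackedState, Finset.sum_ite_eq, Finset.mem_univ, if_true,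
      sub_neg_eq_add]
  have hcomp := (Gm m ⊗ₖ (1 : Matrix (Fin n) (Fin n) ℝ)).mulVecLin.toContinuousLinearMap.hasFDerivAt
    |>.comp_hasDerivAt t hstacked
  refine hcomp.congr_deriv ?_
  simp only [LinearMap.coe_toContinuousLinearMap', mulVecLin_apply, LMIData.errorField, errorState,
    mulVec_sub, mulVec_sum, mulVec_mulVec, Abar_mul_Gm_kronecker, Bbar_mul_Gm_kronecker]

theorem tendsto_sub_zero_of_tendsto_errorState {l : Filter ℝ}
    (hz : Filter.Tendsto (errorState x) l (nhds 0)) (i j : Fin m) :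
    Filter.Tendsto (fun t => x i t - x j t) l (nhds 0) := by
  have hlift : Filter.Tendsto (fun t =>
      (Um m ⊗ₖ (1 : Matrix (Fin n) (Fin n) ℝ)) *ᵥ errorState x t) l (nhds 0) := by
    have hcont : Continuous fun v : ag m n → ℝ =>
      (Um m ⊗ₖ (1 : Matrix (Fin n) (Fin n) ℝ)) *ᵥ v := by fun_prop
    simpa only [Function.comp_def, mulVec_zero] using (hcont.tendsto 0).comp hz
  rw [tendsto_pi_nhds] at hlift ⊢
  intro c
  simpa only [Um_kronecker_mulVec_errorState_sub, Pi.sub_apply, Pi.zero_apply, sub_zero] using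
    (hlift (i, c)).sub (hlift (j, c))

end ErrorDynamics

/-- **Corollary 1** (consensus criterion without zero-equality weighting matrices): if
for each agent `k` there exist `P_k ≻ 0`, `Q_{1k}, Q_{2k} ≻ 0`, `R_{1k}, R_{2k} ≻ 0` and
free matrices `Y_{ikj}` such that the LMI block matrix is negative definite at all `2^m`
vertices of the delay box, then the delayed multi-agent system achieves consensus:
`x_i(t) − x_j(t) → 0` as `t → ∞` for all agents `i, j`. -/
theorem corollary1_consensus (m n r N : ℕ) (hm : 2 ≤ m) (hn : 1 ≤ n) (hN : 1 ≤ N)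
    (A : Matrix (Fin n) (Fin n) ℝ) (B : Matrix (Fin n) (Fin r) ℝ)
    (K : Matrix (Fin r) (Fin n) ℝ) (adj : Fin m → Fin m → ℝ)
    (τl τu : Fin m → ℝ) (τ : Fin m → ℝ → ℝ)
    (hτcont : ∀ k, Continuous (τ k))
    (hτbound : ∀ k t, 0 ≤ τl k ∧ τl k ≤ τ k t ∧ τ k t ≤ τu k)
    (x : Fin m → ℝ → Fin n → ℝ)
    (hdyn : ∀ (k : Fin m) (t : ℝ), HasDerivAt (x k)
      (A.mulVec (x k t) + B.mulVec (uCtrl m n r K adj x k (t - τ k t))) t)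
    (P : Fin m → Matrix (Fin 3 × ag m n) (Fin 3 × ag m n) ℝ)
    (Q1 Q2 : Fin m → Matrix (ag m n) (ag m n) ℝ)
    (R1 R2 : Fin m → Matrix (ag m n ⊕ ag m n) (ag m n ⊕ ag m n) ℝ)
    (Y : Fin 3 → Fin m → Fin (2 * N + 1) → Matrix (bg m n N) (ag m n) ℝ)
    (hP : ∀ k, (P k).PosDef) (hQ1 : ∀ k, (Q1 k).PosDef) (hQ2 : ∀ k, (Q2 k).PosDef)
    (hR1 : ∀ k, (R1 k).PosDef) (hR2 : ∀ k, (R2 k).PosDef)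
    (hLMI : ∀ τv : Fin m → ℝ, (∀ k, τv k = τl k ∨ τv k = τu k) →
      (-(LMImatC m n r N A adj B K τl τu τv P Q1 Q2 R1 R2 Y)).PosDef) :
    ∀ i j : Fin m,
      Filter.Tendsto (fun t => x i t - x j t) Filter.atTop (nhds (0 : Fin n → ℝ)) := by
  intro i j
  let D : LMIData m n r N := ⟨A, B, K, adj, τl, τu, P, Q1, Q2, R1, R2, Y⟩
  have hD : D.Feasible :=
    { lower_nonneg := fun k => (hτbound k 0).1
      lower_le_upper := fun k => (hτbound k 0).2.1.trans (hτbound k 0).2.2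
      posDef_P := hP
      posDef_Q1 := hQ1
      posDef_Q2 := hQ2
      posDef_R1 := hR1
      posDef_R2 := hR2
      posDef_neg_lmi := hLMI }
  have herror : ∀ t, HasDerivAt (errorState x) (D.errorField τ (errorState x) t) t :=
    hasDerivAt_errorState D hdyn
  have hzero : Filter.Tendsto (errorState x) Filter.atTop (nhds 0) :=
    LMIData.tendsto_zero_of_feasible hD hN i hτcont (fun k t => (hτbound k t).2) herror
  exact tendsto_sub_zero_of_tendsto_errorState hzero i j
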